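/- Let n ≥ 2, 0 < α < 1 and k ≥ 1 be an integer. Let Ω ⊂ ℝⁿ be a bounded domain with 0 ∈ ∂Ω and let u solve Δu = f in Ω∩B₁ and u = g on ∂Ω∩B₁. Suppose u ∈ C^{k,α}(0), f ∈ C^{k−1,α}(0), g ∈ C^{k+1,α}(0), ∂Ω ∈ C^{1,α}(0), and u(0) = |Du(0)| = ⋯ = |D^k u(0)| = 0 and |Dg(0)| = ⋯ = |D^k g(0)| = 0. Then u ∈ C^{k+1,α}(0): there exist a constant C, depending only on n, k, α and ‖∂Ω∩B₁‖_{C^{1,α}(0)}, and a homogeneous polynomial P of degree k+1 such that |u(x) − P(x)| ≤ C|x|^{k+1+α}(‖u‖_{L^∞(Ω∩B₁)} + ‖f‖_{C^{k−1,α}(0)} + ‖g‖_{C^{k+1,α}(0)}) for all x ∈ Ω∩B₁, |D^{k+1}u(0)| ≤ C(‖u‖_{L^∞(Ω∩B₁)} + ‖f‖_{C^{k−1,α}(0)} + ‖g‖_{C^{k+1,α}(0)}), and moreover ΔP ≡ P_f and P(x′,0) ≡ P_g(x′,0). -/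

import Mathlib

open MvPolynomial Metric Set MeasureTheory Bornology

noncomputable section

/-- `ℝⁿ` with the Euclidean norm. -/
abbrev En (n : ℕ) := EuclideanSpace ℝ (Fin n)

variable {n : ℕ}

/-- Evaluation of a multivariate polynomial at a point of `ℝⁿ`. -/
def peval (P : MvPolynomial (Fin n) ℝ) (x : En n) : ℝ :=
  MvPolynomial.eval (fun i => x i) P

/-- Total degree of a monomial (multi-index). -/
def mdeg (d : Fin n →₀ ℕ) : ℕ := d.sum fun _ e => e

/-- `σ!` for a multi-index `σ`. -/
def mfact (d : Fin n →₀ ℕ) : ℕ := d.prod fun _ e => Nat.factorial e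

/-- The norm `‖P‖ = Σ_σ |a_σ|` of a polynomial `P = Σ_σ (a_σ/σ!) x^σ`. -/
def pnorm (P : MvPolynomial (Fin n) ℝ) : ℝ :=
  ∑ d ∈ P.support, (mfact d : ℝ) * |MvPolynomial.coeff d P|

/-- `|D^i P(0)|`, the Euclidean norm of the `i`-th derivative of `P` at `0`. -/
def derivNorm (i : ℕ) (P : MvPolynomial (Fin n) ℝ) : ℝ :=
  Real.sqrt (∑ d ∈ P.support.filter (fun d => mdeg d = i),
    ((mfact d : ℝ) * MvPolynomial.coeff d P) ^ 2)

/-- Polynomial Laplacian. -/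
def plap (P : MvPolynomial (Fin n) ℝ) : MvPolynomial (Fin n) ℝ :=
  ∑ i, MvPolynomial.pderiv i (MvPolynomial.pderiv i P)

/-- The index of the last coordinate. -/
def lastIdx (n : ℕ) [NeZero n] : Fin n :=
  ⟨n - 1, Nat.sub_lt (Nat.pos_of_ne_zero (NeZero.ne n)) Nat.one_pos⟩

variable [NeZero n]

/-- The last coordinate `x_n`. -/
def xn (x : En n) : ℝ := x (lastIdx n)

/-- `|x′|`, the norm of the first `n-1` coordinates. -/
def xpn (x : En n) : ℝ :=
  Real.sqrt (∑ i ∈ Finset.univ.erase (lastIdx n), (x i) ^ 2)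

/-- Substitution of the polynomial `q` for the last variable `x_n`. -/
def substLast (q P : MvPolynomial (Fin n) ℝ) : MvPolynomial (Fin n) ℝ :=
  MvPolynomial.aeval (fun i => if i = lastIdx n then q else MvPolynomial.X i) P

/-- The pointwise Laplacian of `u` at `x` (sum of pure second derivatives). -/
def lapAt (u : En n → ℝ) (x : En n) : ℝ :=
  ∑ i, fderiv ℝ (fderiv ℝ u) x (EuclideanSpace.single i 1) (EuclideanSpace.single i 1)

/-- `u` is a (classical) solution of `Δu = f` in `Ω ∩ B₁`, `u = g` on `∂Ω ∩ B₁`. -/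
def SolvesDirichlet (Ω : Set (En n)) (u f g : En n → ℝ) : Prop :=
  ContinuousOn u (closure Ω ∩ ball 0 1) ∧
  (∀ x ∈ Ω ∩ ball (0 : En n) 1,
    DifferentiableAt ℝ u x ∧ DifferentiableAt ℝ (fderiv ℝ u) x ∧ lapAt u x = f x) ∧
  (∀ x ∈ frontier Ω ∩ ball (0 : En n) 1, u x = g x)

/-- `u` is a (classical) solution of the oblique derivative problem `Δu = f` in `Ω ∩ B₁`,
`β·Du = g` on `∂Ω ∩ B₁`, with `‖β‖_∞ ≤ 1` and `β·e_n ≥ a₀`; `Du` is the (continuous up to the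
boundary) gradient of `u`. -/
def SolvesOblique (Ω : Set (En n)) (u f g : En n → ℝ) (β Du : En n → En n) (a₀ : ℝ) : Prop :=
  ContinuousOn u (closure Ω ∩ ball 0 1) ∧
  ContinuousOn Du (closure Ω ∩ ball 0 1) ∧
  (∀ x ∈ Ω ∩ ball (0 : En n) 1,
    DifferentiableAt ℝ u x ∧ (∀ i, fderiv ℝ u x (EuclideanSpace.single i 1) = Du x i) ∧
    DifferentiableAt ℝ (fderiv ℝ u) x ∧ lapAt u x = f x) ∧
  (∀ x ∈ frontier Ω ∩ ball (0 : En n) 1,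
    (∑ i, β x i * Du x i) = g x ∧ ‖β x‖ ≤ 1 ∧ a₀ ≤ β x (lastIdx n))

/-- `∂Ω ∈ C^{m,α}(0)` with polynomial `P_Ω = P` and constant `K`. -/
def DomainCmα (m : ℕ) (α K : ℝ) (P : MvPolynomial (Fin n) ℝ) (Ω : Set (En n)) : Prop :=
  P.totalDegree ≤ m ∧ MvPolynomial.coeff 0 P = 0 ∧
  MvPolynomial.pderiv (lastIdx n) P = 0 ∧
  (1 ≤ m → ∀ i, MvPolynomial.coeff (Finsupp.single i 1) P = 0) ∧
  (∀ x : En n, ‖x‖ < 1 → xn x > peval P x + K * (xpn x) ^ ((m : ℝ) + α) → x ∈ Ω) ∧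
  (∀ x : En n, ‖x‖ < 1 → xn x < peval P x - K * (xpn x) ^ ((m : ℝ) + α) → x ∉ Ω)

/-- `∂Ω ∈ C^{1,α}(0)` with constant `K` (the degree-one polynomial is necessarily `0`). -/
def Domain1α (α K : ℝ) (Ω : Set (En n)) : Prop :=
  (∀ x : En n, ‖x‖ < 1 → xn x > K * (xpn x) ^ ((1 : ℝ) + α) → x ∈ Ω) ∧
  (∀ x : En n, ‖x‖ < 1 → xn x < -(K * (xpn x) ^ ((1 : ℝ) + α)) → x ∉ Ω)

/-- `[∂Ω∩B₁]_{C^{0,1}(0)} ≤ δ`. -/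
def DomainLip (δ : ℝ) (Ω : Set (En n)) : Prop :=
  (∀ x : En n, ‖x‖ < 1 → xn x > δ * xpn x → x ∈ Ω) ∧
  (∀ x : En n, ‖x‖ < 1 → xn x < -(δ * xpn x) → x ∉ Ω)

/-- `osc_{B₁} ∂Ω ≤ δ`. -/
def FrontierOscLe (Ω : Set (En n)) (δ : ℝ) : Prop :=
  ∀ x ∈ frontier Ω ∩ ball (0 : En n) 1, ∀ y ∈ frontier Ω ∩ ball (0 : En n) 1,
    xn x - xn y ≤ δ

/-- The `L^n` norm of `f` on a set `S ⊆ ℝⁿ`. -/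
def LnNorm (n : ℕ) (S : Set (En n)) (f : En n → ℝ) : ℝ :=
  (∫ x in S, |f x| ^ (n : ℝ)) ^ ((n : ℝ)⁻¹)

/-- `∂Ω` is `C^{m,α}` at the point `x₀` with constants `K, r₀`: after an isometric change of
coordinates `φ` taking `x₀` to `0`, the boundary is trapped between `P_Ω(x′) ± K|x′|^{m+α}`. -/
def BoundaryPtCmα (m : ℕ) (α K r₀ : ℝ) (Ω : Set (En n)) (x₀ : En n) : Prop :=
  ∃ (φ : En n ≃ᵢ En n) (P : MvPolynomial (Fin n) ℝ), φ x₀ = 0 ∧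
    P.totalDegree ≤ m ∧ MvPolynomial.coeff 0 P = 0 ∧
    MvPolynomial.pderiv (lastIdx n) P = 0 ∧
    (1 ≤ m → ∀ i, MvPolynomial.coeff (Finsupp.single i 1) P = 0) ∧
    (∀ y : En n, ‖y‖ < r₀ → xn y > peval P y + K * (xpn y) ^ ((m : ℝ) + α) → φ.symm y ∈ Ω) ∧
    (∀ y : En n, ‖y‖ < r₀ → xn y < peval P y - K * (xpn y) ^ ((m : ℝ) + α) → φ.symm y ∉ Ω)

/-- `∂Ω ∩ B₁ ∈ C^{m,α}`: pointwise `C^{m,α}` with constants uniform on compact subsets. -/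
def BoundaryCmα (m : ℕ) (α : ℝ) (Ω : Set (En n)) : Prop :=
  ∀ S : Set (En n), IsCompact S → S ⊆ frontier Ω ∩ ball (0 : En n) 1 →
    ∃ K r₀ : ℝ, 0 ≤ K ∧ 0 < r₀ ∧ ∀ x₀ ∈ S, BoundaryPtCmα m α K r₀ Ω x₀

/-- `∂Ω ∩ B₁ ∈ C^∞`. -/
def BoundarySmooth (Ω : Set (En n)) : Prop :=
  ∀ m : ℕ, 1 ≤ m → ∀ α : ℝ, 0 < α → α ≤ 1 → BoundaryCmα m α Ω

/-- `u ∈ C^∞(Ω̄ ∩ B₁)`: near every point of `Ω̄ ∩ B₁`, `u` agrees on `Ω` with a globally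
smooth function. -/
def SmoothUpToBoundary (Ω : Set (En n)) (u : En n → ℝ) : Prop :=
  ∀ x₀ ∈ closure Ω ∩ ball (0 : En n) 1, ∃ ε : ℝ, 0 < ε ∧ ∃ v : En n → ℝ,
    ContDiff ℝ (⊤ : ℕ∞) v ∧ ∀ x ∈ Ω ∩ ball x₀ ε, v x = u x


section MyProof
set_option linter.unusedSectionVars false
set_option linter.deprecated false

open Filter Topology

lemma peval_add (P Q : MvPolynomial (Fin n) ℝ) (x : En n) :
    peval (P + Q) x = peval P x + peval Q x := by simp [peval]
lemma peval_sub (P Q : MvPolynomial (Fin n) ℝ) (x : En n) :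
    peval (P - Q) x = peval P x - peval Q x := by simp [peval]
lemma peval_neg (P : MvPolynomial (Fin n) ℝ) (x : En n) :
    peval (-P) x = - peval P x := by simp [peval]
lemma peval_mul (P Q : MvPolynomial (Fin n) ℝ) (x : En n) :
    peval (P * Q) x = peval P x * peval Q x := by simp [peval]
lemma peval_C (c : ℝ) (x : En n) : peval (C c) x = c := by simp [peval]
lemma peval_X (i : Fin n) (x : En n) : peval (X i) x = x i := by simp [peval]
lemma peval_zero (x : En n) : peval 0 x = 0 := by simp [peval]
lemma peval_sum {ι : Type*} (s : Finset ι) (P : ι → MvPolynomial (Fin n) ℝ) (x : En n) :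
    peval (∑ i ∈ s, P i) x = ∑ i ∈ s, peval (P i) x := by simp [peval]

lemma plap_add (P Q : MvPolynomial (Fin n) ℝ) : plap (P + Q) = plap P + plap Q := by
  simp [plap, Finset.sum_add_distrib]
lemma plap_zero : plap (0 : MvPolynomial (Fin n) ℝ) = 0 := by
  simp [plap]
lemma plap_neg (P : MvPolynomial (Fin n) ℝ) : plap (-P) = -plap P := by
  simp [plap]
lemma plap_sub (P Q : MvPolynomial (Fin n) ℝ) : plap (P - Q) = plap P - plap Q := by
  simp [plap]
lemma plap_C_mul (c : ℝ) (P : MvPolynomial (Fin n) ℝ) : plap (C c * P) = C c * plap P := by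
  simp [plap, Finset.mul_sum, Derivation.leibniz]
lemma plap_sum {ι : Type*} (s : Finset ι) (P : ι → MvPolynomial (Fin n) ℝ) :
    plap (∑ i ∈ s, P i) = ∑ i ∈ s, plap (P i) := by
  simp only [plap, map_sum]
  rw [Finset.sum_comm]
lemma plap_C (c : ℝ) : plap (C c : MvPolynomial (Fin n) ℝ) = 0 := by
  simp [plap]

lemma hasFDerivAt_peval (P : MvPolynomial (Fin n) ℝ) (x : En n) :
    HasFDerivAt (peval P) (∑ i, peval (pderiv i P) x • (EuclideanSpace.proj i : En n →L[ℝ] ℝ)) x := by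
  induction P using MvPolynomial.induction_on with
  | C a =>
    have : peval (C a : MvPolynomial (Fin n) ℝ) = fun _ => a := by funext y; exact peval_C a y
    rw [this]; simpa [peval_zero] using hasFDerivAt_const a x
  | add p q hp hq =>
    have : peval (p + q) = peval p + peval q := by funext y; exact peval_add p q y
    rw [this]
    refine (hp.add hq).congr_fderiv ?_
    simp [peval_add, add_smul, Finset.sum_add_distrib]
  | mul_X p j hp =>
    have : peval (p * X j) = fun y => peval p y * y j := by
      funext y; rw [peval_mul, peval_X]
    rw [this]
    have h2 : HasFDerivAt (fun y : En n => y j) (EuclideanSpace.proj j : En n →L[ℝ] ℝ) x :=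
      (EuclideanSpace.proj j : En n →L[ℝ] ℝ).hasFDerivAt
    refine (hp.mul h2).congr_fderiv ?_
    symm
    ext v
    simp only [Derivation.leibniz, pderiv_X, smul_eq_mul, peval_add, peval_mul, peval_X,
      ContinuousLinearMap.add_apply, ContinuousLinearMap.smul_apply, ContinuousLinearMap.sum_apply,
      add_smul, Finset.sum_add_distrib, Finset.smul_sum, smul_smul]
    congr 1
    rw [Finset.sum_eq_single j]
    · simp [peval]
    · intro b _ hb; simp [Pi.single_apply, hb.symm, peval]
    · simp

lemma continuous_peval (P : MvPolynomial (Fin n) ℝ) : Continuous (peval P) :=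
  continuous_iff_continuousAt.2 fun x => (hasFDerivAt_peval P x).continuousAt

/-- twice differentiable at `x` -/
def W2 (w : En n → ℝ) (x : En n) : Prop :=
  (∀ᶠ y in 𝓝 x, DifferentiableAt ℝ w y) ∧ DifferentiableAt ℝ (fderiv ℝ w) x

lemma fderiv_peval (P : MvPolynomial (Fin n) ℝ) :
    fderiv ℝ (peval P) = fun x => ∑ i, peval (pderiv i P) x • (EuclideanSpace.proj i : En n →L[ℝ] ℝ) := by
  funext x; exact (hasFDerivAt_peval P x).fderiv

lemma hasFDerivAt_fderiv_peval (P : MvPolynomial (Fin n) ℝ) (x : En n) :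
    HasFDerivAt (fderiv ℝ (peval P))
      (∑ i, (∑ j, peval (pderiv j (pderiv i P)) x • (EuclideanSpace.proj j : En n →L[ℝ] ℝ)).smulRight
        (EuclideanSpace.proj i : En n →L[ℝ] ℝ)) x := by
  rw [fderiv_peval]
  refine HasFDerivAt.fun_sum (u := Finset.univ) (A := fun i (y : En n) =>
    peval (pderiv i P) y • (EuclideanSpace.proj i : En n →L[ℝ] ℝ)) fun i _ => ?_
  exact (hasFDerivAt_peval (pderiv i P) x).smul_const (EuclideanSpace.proj i : En n →L[ℝ] ℝ)

lemma W2_peval (P : MvPolynomial (Fin n) ℝ) (x : En n) : W2 (peval P) x :=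
  ⟨Eventually.of_forall fun y => (hasFDerivAt_peval P y).differentiableAt,
    (hasFDerivAt_fderiv_peval P x).differentiableAt⟩

lemma lapAt_peval (P : MvPolynomial (Fin n) ℝ) (x : En n) :
    lapAt (peval P) x = peval (plap P) x := by
  unfold lapAt plap
  rw [(hasFDerivAt_fderiv_peval P x).fderiv, peval_sum]
  refine Finset.sum_congr rfl fun i _ => ?_
  simp [ContinuousLinearMap.sum_apply, Pi.single_apply]

lemma W2.sub {u v : En n → ℝ} {x : En n} (hu : W2 u x) (hv : W2 v x) :
    W2 (fun y => u y - v y) x ∧ lapAt (fun y => u y - v y) x = lapAt u x - lapAt v x := by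
  have he : fderiv ℝ (fun y => u y - v y) =ᶠ[𝓝 x] fun y => fderiv ℝ u y - fderiv ℝ v y := by
    filter_upwards [hu.1, hv.1] with y h1 h2
    exact fderiv_fun_sub h1 h2
  have hd : HasFDerivAt (fderiv ℝ (fun y => u y - v y))
      (fderiv ℝ (fderiv ℝ u) x - fderiv ℝ (fderiv ℝ v) x) x :=
    (hu.2.hasFDerivAt.fun_sub hv.2.hasFDerivAt).congr_of_eventuallyEq he
  refine ⟨⟨?_, hd.differentiableAt⟩, ?_⟩
  · filter_upwards [hu.1, hv.1] with y h1 h2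
    exact h1.fun_sub h2
  · unfold lapAt
    rw [hd.fderiv]
    simp

lemma W2.neg {u : En n → ℝ} {x : En n} (hu : W2 u x) :
    W2 (fun y => - u y) x ∧ lapAt (fun y => - u y) x = - lapAt u x := by
  have h := (W2_peval (0 : MvPolynomial (Fin n) ℝ) x).sub hu
  have e : (fun y => peval (0 : MvPolynomial (Fin n) ℝ) y - u y) = fun y => - u y := by
    funext y; simp [peval_zero]
  rw [e, lapAt_peval, plap_zero, peval_zero, zero_sub] at h
  exact h

lemma W2.second_le {w : En n → ℝ} {x : En n} (h : W2 w x) (hm : IsLocalMax w x) (e : En n) :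
    fderiv ℝ (fderiv ℝ w) x e e ≤ 0 := by
  by_contra! hpos
  set l : ℝ → En n := fun t => x + t • e with hl
  have hlc : Continuous l := by fun_prop
  have hl0 : l 0 = x := by simp [hl]
  have hld : ∀ t, HasDerivAt l e t := by
    intro t
    have := ((hasDerivAt_id t).smul_const e).const_add x
    rwa [one_smul] at this
  have hlt : Tendsto l (𝓝 0) (𝓝 x) := by
    have := hlc.tendsto 0
    rwa [hl0] at this
  have hev : deriv (fun t => w (l t)) =ᶠ[𝓝 0] fun t => fderiv ℝ w (l t) e := by
    filter_upwards [hlt.eventually h.1] with t ht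
    exact (ht.hasFDerivAt.comp_hasDerivAt t (hld t)).deriv
  have hdd : HasDerivAt (deriv (fun t => w (l t))) (fderiv ℝ (fderiv ℝ w) x e e) 0 := by
    have h1 : HasFDerivAt (fderiv ℝ w) (fderiv ℝ (fderiv ℝ w) x) (l 0) := by
      rw [hl0]; exact h.2.hasFDerivAt
    have h2 := h1.comp_hasDerivAt (0:ℝ) (hld 0)
    exact (h2.clm_apply (hasDerivAt_const 0 e)).congr_of_eventuallyEq (by simpa using hev) |>.congr_deriv
      (by simp)
  have hmax : IsLocalMax (fun t => w (l t)) 0 := by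
    have := hlt.eventually hm
    simpa [IsLocalMax, IsMaxFilter, hl0] using this
  have hd0 : deriv (fun t => w (l t)) 0 = 0 := hmax.deriv_eq_zero
  have hc : ContinuousAt (fun t => w (l t)) 0 := by
    have h1 : ContinuousAt w (l 0) := by rw [hl0]; exact h.1.self_of_nhds.continuousAt
    exact ContinuousAt.comp (f := l) h1 hlc.continuousAt
  have hmin := isLocalMin_of_deriv_deriv_pos (f := fun t => w (l t)) (x₀ := 0)
    (by rw [hdd.deriv]; exact hpos) hd0 hc
  have hconst : (fun t => w (l t)) =ᶠ[𝓝 0] fun _ => w (l 0) := by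
    filter_upwards [hmax, hmin] with t h1 h2
    exact le_antisymm h1 h2
  have hz : deriv (fun t => w (l t)) =ᶠ[𝓝 0] fun _ => 0 := by
    have := hconst.deriv
    filter_upwards [this] with t ht
    rw [ht]; simp
  have := hz.deriv_eq
  rw [hdd.deriv] at this
  simp at this
  linarith

lemma W2.lap_le {w : En n → ℝ} {x : En n} (h : W2 w x) (hm : IsLocalMax w x) :
    lapAt w x ≤ 0 := by
  unfold lapAt
  exact Finset.sum_nonpos fun i _ => h.second_le hm _

/-- `|x-c|²` as a polynomial -/
def sqP (c : En n) : MvPolynomial (Fin n) ℝ := ∑ i, (X i - C (c i)) ^ 2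

lemma peval_sqP (c x : En n) : peval (sqP c) x = ‖x - c‖ ^ 2 := by
  rw [EuclideanSpace.norm_sq_eq, sqP, peval_sum]
  refine Finset.sum_congr rfl fun i _ => ?_
  simp [peval]

lemma plap_lin_sq (j : Fin n) (a : ℝ) : plap ((X j - C a) ^ 2) = C 2 := by
  unfold plap
  rw [Finset.sum_eq_single j]
  · simp [Derivation.leibniz_pow, Derivation.leibniz]
    rw [← map_ofNat (C : ℝ →+* MvPolynomial (Fin n) ℝ) 2, pderiv_C, mul_zero, add_zero]
  · intro b _ hb
    simp [Derivation.leibniz_pow, Derivation.leibniz, pderiv_X, Pi.single_apply, hb.symm]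
  · simp

lemma plap_sqP (c : En n) : plap (sqP c) = C (2 * (n : ℝ)) := by
  rw [sqP, plap_sum]
  simp only [plap_lin_sq]
  rw [Finset.sum_const, Finset.card_univ, Fintype.card_fin, nsmul_eq_mul, ← C_eq_coe_nat, ← C_mul, mul_comm]

/-- quadratic barrier -/
def bar (j : Fin n) (c : En n) (a c0 c1 c2 c3 : ℝ) : MvPolynomial (Fin n) ℝ :=
  C c0 + C c1 * sqP c + C c2 * (X j - C a) + C c3 * (X j - C a) ^ 2

lemma peval_bar (j : Fin n) (c : En n) (a c0 c1 c2 c3 : ℝ) (x : En n) :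
    peval (bar j c a c0 c1 c2 c3) x =
      c0 + c1 * ‖x - c‖ ^ 2 + c2 * (x j - a) + c3 * (x j - a) ^ 2 := by
  simp only [bar, peval_add, peval_mul, peval_C, peval_sqP, peval_sub, peval_X, pow_two]

lemma plap_bar (j : Fin n) (c : En n) (a c0 c1 c2 c3 : ℝ) :
    plap (bar j c a c0 c1 c2 c3) = C (2 * n * c1 + 2 * c3) := by
  have h : plap (X j - C a : MvPolynomial (Fin n) ℝ) = 0 := by
    rw [plap_sub, plap_C]
    simp only [plap, pderiv_X, sub_zero]
    refine Finset.sum_eq_zero fun i _ => ?_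
    by_cases hi : j = i
    · subst hi; simp
    · simp [Pi.single_apply, hi]
  rw [bar, plap_add, plap_add, plap_add, plap_C, plap_C_mul, plap_C_mul, plap_C_mul, plap_sqP,
    plap_lin_sq, h]
  simp only [zero_add, mul_zero, add_zero, ← C_mul, ← C_add]
  congr 1; ring

theorem MP {D : Set (En n)} (hD : IsOpen D) (hb : IsBounded D) {w : En n → ℝ}
    (hc : ContinuousOn w (closure D)) (h2 : ∀ x ∈ D, W2 w x) (hl : ∀ x ∈ D, 0 ≤ lapAt w x)
    (hf : ∀ x ∈ frontier D, w x ≤ 0) : ∀ x ∈ D, w x ≤ 0 := by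
  intro x0 hx0
  by_contra! hpos
  obtain ⟨R, hR0, hR⟩ : ∃ R : ℝ, 0 < R ∧ closure D ⊆ closedBall 0 R := by
    obtain ⟨R, hR⟩ := hb.subset_closedBall (0 : En n)
    refine ⟨max R 1, by positivity, ?_⟩
    exact closure_minimal (hR.trans (closedBall_subset_closedBall (le_max_left _ _))) isClosed_closedBall
  set ε := w x0 / (2 * R ^ 2) with hε
  have hε0 : 0 < ε := by positivity
  set Q := bar (lastIdx n) (0 : En n) 0 (ε * R ^ 2) (-ε) 0 0 with hQ
  have hQe : ∀ x, peval Q x = ε * R ^ 2 - ε * ‖x‖ ^ 2 := by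
    intro x; rw [hQ, peval_bar]; simp; ring
  have hcomp : IsCompact (closure D) := (isCompact_closedBall (0 : En n) R).of_isClosed_subset isClosed_closure hR
  have hcont : ContinuousOn (fun y => w y - peval Q y) (closure D) :=
    hc.sub (continuous_peval Q).continuousOn
  obtain ⟨y, hy, hmax⟩ := hcomp.exists_isMaxOn ⟨x0, subset_closure hx0⟩ hcont
  have h1 : 0 < w y - peval Q y := by
    have h := hmax (subset_closure hx0)
    simp only [mem_setOf_eq] at h
    refine lt_of_lt_of_le ?_ h
    rw [hQe]
    have : ε * R ^ 2 = w x0 / 2 := by rw [hε]; field_simp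
    nlinarith [mul_nonneg hε0.le (sq_nonneg ‖x0‖)]
  have hyD : y ∈ D := by
    by_contra hn
    have hfr : y ∈ frontier D := by rw [hD.frontier_eq]; exact ⟨hy, hn⟩
    have h3 := hf y hfr
    have h4 : ‖y‖ ≤ R := by simpa using hR hy
    rw [hQe] at h1
    nlinarith [mul_nonneg hε0.le (sub_nonneg.2 (pow_le_pow_left₀ (norm_nonneg y) h4 2))]
  have hlm : IsLocalMax (fun y => w y - peval Q y) y :=
    (hmax.on_subset subset_closure).isLocalMax (hD.mem_nhds hyD)
  have hs := (h2 y hyD).sub (W2_peval Q y)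
  have h5 := hs.1.lap_le hlm
  rw [hs.2, lapAt_peval, hQ, plap_bar, peval_C] at h5
  have hn : (0 : ℝ) < n := by exact_mod_cast Nat.pos_of_ne_zero (NeZero.ne n)
  have := hl y hyD
  nlinarith [mul_pos hn hε0]

theorem MPQ {D : Set (En n)} (hD : IsOpen D) (hb : IsBounded D) {w : En n → ℝ}
    (Q : MvPolynomial (Fin n) ℝ)
    (hc : ContinuousOn w (closure D)) (h2 : ∀ x ∈ D, W2 w x)
    (hl : ∀ x ∈ D, peval (plap Q) x ≤ lapAt w x)
    (hf : ∀ x ∈ frontier D, w x ≤ peval Q x) : ∀ x ∈ D, w x ≤ peval Q x := by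
  intro x hx
  have := MP hD hb (w := fun y => w y - peval Q y) (hc.sub (continuous_peval Q).continuousOn)
    (fun x hx => ((h2 x hx).sub (W2_peval Q x)).1)
    (fun x hx => by
      rw [((h2 x hx).sub (W2_peval Q x)).2, lapAt_peval]; linarith [hl x hx])
    (fun x hx => by linarith [hf x hx]) x hx
  linarith

/-- two-sided version -/
theorem MPabs {D : Set (En n)} (hD : IsOpen D) (hb : IsBounded D) {w : En n → ℝ}
    (Q : MvPolynomial (Fin n) ℝ)
    (hc : ContinuousOn w (closure D)) (h2 : ∀ x ∈ D, W2 w x)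
    (hl : ∀ x ∈ D, |lapAt w x| ≤ - peval (plap Q) x)
    (hf : ∀ x ∈ frontier D, |w x| ≤ peval Q x) : ∀ x ∈ D, |w x| ≤ peval Q x := by
  intro x hx
  rw [abs_le']
  refine ⟨MPQ hD hb Q hc h2 (fun x hx => ?_) (fun x hx => (abs_le'.1 (hf x hx)).1) x hx,
    MPQ hD hb (w := fun y => - w y) Q hc.neg (fun x hx => (h2 x hx).neg.1) (fun x hx => ?_)
      (fun x hx => (abs_le'.1 (hf x hx)).2) x hx⟩
  · have := abs_le.1 (hl x hx); linarith
  · rw [(h2 x hx).neg.2]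
    have := abs_le.1 (hl x hx); linarith


open Filter Topology

/-- reflection of a point in the hyperplane `x_j = a` -/
def rpt (j : Fin n) (a : ℝ) (x : En n) : En n :=
  WithLp.toLp 2 (fun i => if i = j then 2 * a - x j else x i)

/-- reflection of a polynomial -/
def reflP (j : Fin n) (a : ℝ) (P : MvPolynomial (Fin n) ℝ) : MvPolynomial (Fin n) ℝ :=
  aeval (fun i => if i = j then C (2 * a) - X j else X i) P

lemma peval_reflP (j : Fin n) (a : ℝ) (P : MvPolynomial (Fin n) ℝ) (x : En n) :
    peval (reflP j a P) x = peval P (rpt j a x) := by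
  unfold peval reflP rpt
  induction P using MvPolynomial.induction_on with
  | C c => simp
  | add p q hp hq => simp only [map_add] at *; rw [hp, hq]
  | mul_X p i hp =>
    simp only [map_mul, aeval_X, eval_X] at *
    rw [hp]
    congr 1
    split_ifs with h <;> simp

lemma pderiv_reflP (i j : Fin n) (a : ℝ) (P : MvPolynomial (Fin n) ℝ) :
    pderiv i (reflP j a P) = (if i = j then -1 else 1) * reflP j a (pderiv i P) := by
  unfold reflP
  induction P using MvPolynomial.induction_on with
  | C c => simp
  | add p q hp hq => simp only [map_add] at *; rw [hp, hq]; ring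
  | mul_X p k hp =>
    simp only [map_mul, map_add, aeval_X, Derivation.leibniz, smul_eq_mul, pderiv_X] at *
    rw [hp]
    by_cases hkj : k = j
    · subst hkj
      by_cases hik : i = k
      · subst hik; simp; ring
      · have : k ≠ i := fun h => hik h.symm
        simp [hik, Pi.single_apply, this, pderiv_X]
    · by_cases hik : i = k
      · subst hik; simp [hkj]
      · have : k ≠ i := fun h => hik h.symm
        simp [hkj, Pi.single_apply, this, pderiv_X]

lemma plap_reflP (j : Fin n) (a : ℝ) (P : MvPolynomial (Fin n) ℝ) :
    plap (reflP j a P) = reflP j a (plap P) := by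
  have h : reflP j a (plap P) = ∑ i, reflP j a (pderiv i (pderiv i P)) := by
    simp [reflP, plap]
  rw [h, plap]
  refine Finset.sum_congr rfl fun i _ => ?_
  rw [pderiv_reflP]
  split_ifs with h
  · simp [pderiv_reflP, h]
  · simp [pderiv_reflP, h]

lemma reflP_zero (j : Fin n) (a : ℝ) : reflP j a 0 = 0 := by simp [reflP]

lemma rpt_norm (j : Fin n) (c x : En n) : ‖rpt j (c j) x - c‖ = ‖x - c‖ := by
  rw [EuclideanSpace.norm_eq, EuclideanSpace.norm_eq]
  congr 1
  refine Finset.sum_congr rfl fun i _ => ?_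
  by_cases h : i = j
  · subst h; simp only [rpt, PiLp.sub_apply, if_true, Real.norm_eq_abs]
    congr 1
    rw [← abs_neg]; congr 1; ring
  · simp [rpt, h]

lemma half_frontier {j : Fin n} {c : En n} {ρ : ℝ} {x : En n}
    (hx : x ∈ frontier (ball c ρ ∩ {x : En n | c j < x j})) :
    ‖x - c‖ ≤ ρ ∧ c j ≤ x j ∧ (‖x - c‖ = ρ ∨ x j = c j) := by
  have ho : IsOpen (ball c ρ ∩ {x : En n | c j < x j}) :=
    isOpen_ball.inter (isOpen_lt continuous_const (by fun_prop))
  rw [ho.frontier_eq] at hx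
  have hcl : closure (ball c ρ ∩ {x : En n | c j < x j}) ⊆ closedBall c ρ ∩ {x : En n | c j ≤ x j} := by
    apply closure_minimal
    · rintro y ⟨h1, h2⟩
      exact ⟨ball_subset_closedBall h1, le_of_lt (show c j < y j from h2)⟩
    · exact isClosed_closedBall.inter (isClosed_le continuous_const (by fun_prop))
  have h1 := hcl hx.1
  have h2 : ‖x - c‖ ≤ ρ := by simpa [dist_eq_norm] using h1.1
  have h3 : c j ≤ x j := h1.2
  refine ⟨h2, h3, ?_⟩
  by_contra! hcon
  exact hx.2 ⟨by rw [mem_ball, dist_eq_norm]; exact lt_of_le_of_ne h2 hcon.1,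
    lt_of_le_of_ne h3 (Ne.symm hcon.2)⟩

lemma half_open (j : Fin n) (c : En n) (ρ : ℝ) : IsOpen (ball c ρ ∩ {x : En n | c j < x j}) :=
  isOpen_ball.inter (isOpen_lt continuous_const (by fun_prop))

lemma n_pos : (0 : ℝ) < n := by exact_mod_cast Nat.pos_of_ne_zero (NeZero.ne n)
lemma n_one : (1 : ℝ) ≤ n := by exact_mod_cast Nat.pos_of_ne_zero (NeZero.ne n)

lemma single_norm_coord (j i : Fin n) (t : ℝ) :
    (t • (EuclideanSpace.single j 1 : En n)) i = if i = j then t else 0 := by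
  simp [Pi.single_apply]

lemma coord_le (x : En n) (j : Fin n) : |x j| ≤ ‖x‖ := by
  simpa using PiLp.norm_apply_le x j

lemma grad_est {h : MvPolynomial (Fin n) ℝ} (hh : plap h = 0) {c : En n} {ρ S : ℝ} (hρ : 0 < ρ)
    (hS : ∀ x ∈ closedBall c ρ, |peval h x| ≤ S) (j : Fin n) :
    |peval (pderiv j h) c| ≤ n * S / ρ := by
  have hS0 : 0 ≤ S := (abs_nonneg _).trans (hS c (mem_closedBall_self hρ.le))
  have hn := n_one (n := n)
  set ψ := h - reflP j (c j) h with hψ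
  have hψe : ∀ x, peval ψ x = peval h x - peval h (rpt j (c j) x) := by
    intro x; rw [hψ, peval_sub, peval_reflP]
  have hψl : plap ψ = 0 := by rw [hψ, plap_sub, plap_reflP, hh, reflP_zero, sub_zero]
  set K := 2 * S / ρ ^ 2 with hK
  have hK0 : 0 ≤ K := by positivity
  set Q := bar j c (c j) 0 K (K * n * ρ) (-(K * n)) with hQ
  have hQe : ∀ x : En n, peval Q x = K * (‖x - c‖ ^ 2 + n * (x j - c j) * (ρ - (x j - c j))) := by
    intro x; rw [hQ, peval_bar]; ring
  have hQl : plap Q = 0 := by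
    rw [hQ, plap_bar, show 2 * (n:ℝ) * K + 2 * -(K * n) = 0 by ring, C_0]
  have key : ∀ x ∈ ball c ρ ∩ {x : En n | c j < x j}, |peval ψ x| ≤ peval Q x := by
    apply MPabs (half_open j c ρ) (isBounded_ball.subset inter_subset_left) Q
      (continuous_peval ψ).continuousOn (fun x _ => W2_peval ψ x)
    · intro x _
      rw [lapAt_peval, hψl, hQl, peval_zero]; simp
    · intro x hx
      obtain ⟨h1, h2, h3⟩ := half_frontier hx
      have h4 : x j - c j ≤ ρ := by
        have := coord_le (x - c) j
        simp only [PiLp.sub_apply] at this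
        exact (le_abs_self _).trans (this.trans h1)
      have h5 : 0 ≤ (n:ℝ) * (x j - c j) * (ρ - (x j - c j)) := by
        have := sub_nonneg.2 h2; have := sub_nonneg.2 h4; positivity
      rcases h3 with h3 | h3
      · rw [hψe, hQe, h3]
        have e1 := hS x (by rw [mem_closedBall, dist_eq_norm]; exact h1)
        have e2 := hS (rpt j (c j) x) (by rw [mem_closedBall, dist_eq_norm, rpt_norm]; exact h1)
        have e3 : K * ρ ^ 2 = 2 * S := by rw [hK]; field_simp
        calc |peval h x - peval h (rpt j (c j) x)| ≤ |peval h x| + |peval h (rpt j (c j) x)| := abs_sub _ _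
          _ ≤ K * ρ ^ 2 := by linarith
          _ ≤ _ := by nlinarith [mul_nonneg hK0 h5]
      · have : rpt j (c j) x = x := by
          ext i
          by_cases hi : i = j
          · subst hi; simp [rpt, h3]; ring
          · simp [rpt, hi]
        rw [hψe, this, sub_self, abs_zero, hQe]
        positivity
  set e : En n := EuclideanSpace.single j 1 with he
  set φ : ℝ → ℝ := fun t => peval h (c + t • e) - peval h (c + (-t) • e) with hφ
  have hrp : ∀ t : ℝ, rpt j (c j) (c + t • e) = c + (-t) • e := by
    intro t
    ext i
    simp only [rpt, PiLp.add_apply, he, single_norm_coord]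
    by_cases hi : i = j
    · subst hi; simp; ring
    · simp [hi]
  have hd : HasDerivAt φ (2 * peval (pderiv j h) c) 0 := by
    have h1 : ∀ s : ℝ, HasDerivAt (fun t : ℝ => c + (s * t) • e) (s • e) 0 := by
      intro s
      have := (((hasDerivAt_id (0:ℝ)).const_mul s).smul_const e).const_add c
      rwa [mul_one] at this
    have h2 : ∀ s : ℝ, HasDerivAt (fun t : ℝ => peval h (c + (s * t) • e)) (s * peval (pderiv j h) c) 0 := by
      intro s
      have h3 : HasFDerivAt (peval h) (∑ i, peval (pderiv i h) c • (EuclideanSpace.proj i : En n →L[ℝ] ℝ))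
          (c + (s * 0) • e) := by simpa using hasFDerivAt_peval h c
      have h4 := h3.comp_hasDerivAt (0:ℝ) (h1 s)
      refine h4.congr_deriv ?_
      simp [he, Pi.single_apply]
    have := (h2 1).sub (h2 (-1))
    refine (this.congr_of_eventuallyEq (Eventually.of_forall fun t => ?_)).congr_deriv (by ring)
    simp [hφ]
  have hbd : ∀ t : ℝ, 0 < t → t < ρ → |φ t| ≤ 2 * n * S / ρ * t := by
    intro t ht htρ
    have hnorm : ‖c + t • e - c‖ = t := by
      rw [add_sub_cancel_left, norm_smul, he]; simp [abs_of_pos ht]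
    have hj : (c + t • e) j - c j = t := by
      rw [PiLp.add_apply, he, single_norm_coord]; simp
    have := key (c + t • e) ⟨by rw [mem_ball, dist_eq_norm, hnorm]; exact htρ, by
      simp only [mem_setOf_eq]; linarith⟩
    rw [hψe, hrp, hQe, hj, hnorm] at this
    refine this.trans ?_
    have e3 : 2 * (n:ℝ) * S / ρ * t = K * (n * t * ρ) := by rw [hK]; field_simp
    rw [e3]
    refine mul_le_mul_of_nonneg_left ?_ hK0
    nlinarith [mul_nonneg (sub_nonneg.2 hn) (sq_nonneg t)]
  have hfin := hd.le_of_lip' (C := 2 * n * S / ρ) (by positivity) (by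
    filter_upwards [Ioo_mem_nhds (neg_lt_zero.2 hρ) hρ] with t ht
    have h0 : φ 0 = 0 := by simp [hφ]
    rw [h0, sub_zero, sub_zero, Real.norm_eq_abs, Real.norm_eq_abs]
    rcases lt_trichotomy t 0 with h | h | h
    · have hs : φ t = - φ (-t) := by simp [hφ]
      rw [hs, abs_neg, abs_of_neg h]
      exact hbd (-t) (by linarith) (by linarith [ht.1])
    · subst h; simp [h0]
    · rw [abs_of_pos h]; exact hbd t h ht.2)
  rw [Real.norm_eq_abs, abs_mul, abs_two] at hfin
  have : 2 * (n:ℝ) * S / ρ = 2 * (n * S / ρ) := by ring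
  linarith

lemma mdeg_eq (d : Fin n →₀ ℕ) : mdeg d = d.degree := rfl

lemma mdeg_add (d e : Fin n →₀ ℕ) : mdeg (d + e) = mdeg d + mdeg e := by
  simp [mdeg_eq]
lemma mdeg_single (i : Fin n) (a : ℕ) : mdeg (Finsupp.single i a) = a := by
  simp [mdeg_eq]

lemma plap_pderiv (i : Fin n) (P : MvPolynomial (Fin n) ℝ) :
    plap (pderiv i P) = pderiv i (plap P) := by
  unfold plap
  rw [map_sum]
  refine Finset.sum_congr rfl fun j _ => ?_
  have hc : ∀ Q : MvPolynomial (Fin n) ℝ, pderiv j (pderiv i Q) = pderiv i (pderiv j Q) := by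
    intro Q
    · have h : ⁅(pderiv j : Derivation ℝ (MvPolynomial (Fin n) ℝ) (MvPolynomial (Fin n) ℝ)), (pderiv i : Derivation ℝ (MvPolynomial (Fin n) ℝ) (MvPolynomial (Fin n) ℝ))⁆ = 0 := by
        apply MvPolynomial.derivation_ext
        intro k
        rw [Derivation.commutator_apply]
        simp [pderiv_X, Pi.single_apply]
        split_ifs <;> simp
      have h2 := congrArg (fun D => D Q) h
      simp only [Derivation.commutator_apply] at h2
      exact sub_eq_zero.1 h2
  rw [hc, hc]

lemma coeff_zero_eval (P : MvPolynomial (Fin n) ℝ) : peval P 0 = coeff 0 P := by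
  have : (fun i => (0 : En n) i) = (0 : Fin n → ℝ) := by funext i; simp
  rw [peval, this, MvPolynomial.eval_zero]
  rfl

lemma coeff_est (m : ℕ) : ∃ K : ℝ, 0 < K ∧ ∀ d : Fin n →₀ ℕ, mdeg d = m →
    ∀ (h : MvPolynomial (Fin n) ℝ) (ρ S : ℝ), plap h = 0 → 0 < ρ →
    (∀ x ∈ closedBall (0 : En n) ρ, |peval h x| ≤ S) → |coeff d h| ≤ K * S / ρ ^ m := by
  induction m with
  | zero =>
    refine ⟨1, one_pos, fun d hd h ρ S _ hρ hS => ?_⟩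
    have hd0 : d = 0 := by exact (Finsupp.degree_eq_zero_iff d).1 hd
    subst hd0
    rw [← coeff_zero_eval]
    simpa using hS 0 (mem_closedBall_self hρ.le)
  | succ m ih =>
    obtain ⟨K, hK, H⟩ := ih
    have hn := n_pos (n := n)
    refine ⟨K * n * 2 ^ (m + 1), by positivity, fun d hd h ρ S hl hρ hS => ?_⟩
    obtain ⟨j, hj⟩ : ∃ j, d j ≠ 0 := by
      by_contra! hcon
      have : d = 0 := by ext i; simpa using hcon i
      subst this; simp [mdeg_eq] at hd
    obtain ⟨d', rfl⟩ : ∃ d', d = d' + Finsupp.single j 1 :=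
      ⟨d - Finsupp.single j 1, by
        rw [tsub_add_cancel_of_le]
        rw [Finsupp.single_le_iff]; omega⟩
    have hd' : mdeg d' = m := by rw [mdeg_add, mdeg_single] at hd; omega
    have h1 := H d' hd' (pderiv j h) (ρ / 2) (n * S / (ρ / 2)) (by rw [plap_pderiv, hl, map_zero])
      (by positivity) (fun x hx => grad_est hl (by positivity) (fun y hy => hS y (by
        rw [mem_closedBall, dist_eq_norm] at *
        have := norm_sub_le (y - x) (-x)
        simp only [sub_neg_eq_add, sub_add_cancel, norm_neg] at this
        simp only [sub_zero] at *
        linarith)) j)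
    rw [coeff_pderiv, abs_mul] at h1
    have h2 : (1:ℝ) ≤ |((d' j : ℝ) + 1)| := by
      rw [abs_of_nonneg (by positivity)]
      have : (0:ℝ) ≤ d' j := by positivity
      linarith
    calc |coeff (d' + Finsupp.single j 1) h| ≤ |coeff (d' + Finsupp.single j 1) h| * |((d' j : ℝ) + 1)| :=
          le_mul_of_one_le_right (abs_nonneg _) h2
      _ ≤ _ := h1
      _ = K * n * 2 ^ (m + 1) * S / ρ ^ (m + 1) := by
          rw [div_pow]; field_simp; try ring

lemma fderiv_norm_le (P : MvPolynomial (Fin n) ℝ) (x : En n) (T : ℝ)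
    (hT : ∀ i, |peval (pderiv i P) x| ≤ T) : ‖fderiv ℝ (peval P) x‖ ≤ n * T := by
  rw [(hasFDerivAt_peval P x).fderiv]
  calc _ ≤ ∑ i, ‖peval (pderiv i P) x • (EuclideanSpace.proj i : En n →L[ℝ] ℝ)‖ := norm_sum_le _ _
    _ ≤ ∑ i : Fin n, T := by
      refine Finset.sum_le_sum fun i _ => ?_
      rw [norm_smul]
      have h1 : ‖(EuclideanSpace.proj i : En n →L[ℝ] ℝ)‖ ≤ 1 := by
        apply ContinuousLinearMap.opNorm_le_bound _ zero_le_one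
        intro y; simpa using coord_le y i
      calc _ ≤ T * 1 := mul_le_mul (hT i) h1 (norm_nonneg _) ((abs_nonneg _).trans (hT i))
        _ = T := mul_one T
    _ = n * T := by simp

lemma tail_est (m : ℕ) : ∃ K : ℝ, 0 < K ∧
    ∀ (h : MvPolynomial (Fin n) ℝ) (ρ S : ℝ), plap h = 0 → 0 < ρ →
    (∀ d : Fin n →₀ ℕ, mdeg d < m → coeff d h = 0) →
    (∀ x ∈ closedBall (0 : En n) ρ, |peval h x| ≤ S) →
    ∀ x ∈ closedBall (0 : En n) ρ, |peval h x| ≤ K * S * (‖x‖ / ρ) ^ m := by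
  induction m with
  | zero =>
    refine ⟨1, one_pos, fun h ρ S _ hρ _ hS x hx => ?_⟩
    simpa using hS x hx
  | succ m ih =>
    obtain ⟨K, hK, H⟩ := ih
    have hn := n_pos (n := n)
    refine ⟨K * n * (2 * n) * 2 ^ m + 2 ^ (m + 1), by positivity, fun h ρ S hl hρ h0 hS x hx => ?_⟩
    have hS0 : 0 ≤ S := (abs_nonneg _).trans (hS 0 (mem_closedBall_self hρ.le))
    have hx' : ‖x‖ ≤ ρ := by simpa using hx
    rcases le_or_gt ‖x‖ (ρ / 2) with hxr | hxr
    · have h1 : ∀ y ∈ closedBall (0 : En n) ‖x‖, ∀ i, |peval (pderiv i h) y| ≤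
          K * (n * S / (ρ / 2)) * (‖x‖ / (ρ / 2)) ^ m := by
        intro y hy i
        have hy' : ‖y‖ ≤ ‖x‖ := by simpa using hy
        have := H (pderiv i h) (ρ / 2) (n * S / (ρ / 2)) (by rw [plap_pderiv, hl, map_zero])
          (by positivity) (fun d hd => by
            rw [coeff_pderiv, h0 _ (by rw [mdeg_add, mdeg_single]; omega), zero_mul])
          (fun x hx => grad_est hl (by positivity) (fun y hy => hS y (by
            rw [mem_closedBall, dist_eq_norm] at *
            have := norm_sub_le (y - x) (-x)
            simp only [sub_neg_eq_add, sub_add_cancel, norm_neg] at this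
            simp only [sub_zero] at *
            linarith)) i) y (by simp; linarith)
        refine this.trans ?_
        gcongr
      have h2 := (convex_closedBall (0 : En n) ‖x‖).norm_image_sub_le_of_norm_fderiv_le (𝕜 := ℝ)
        (f := peval h) (fun y _ => (hasFDerivAt_peval h y).differentiableAt)
        (fun y hy => fderiv_norm_le h y _ (h1 y hy)) (mem_closedBall_self (norm_nonneg x))
        (show x ∈ closedBall (0 : En n) ‖x‖ by simp)
      rw [coeff_zero_eval, h0 0 (by simp [mdeg_eq]), sub_zero, sub_zero, Real.norm_eq_abs] at h2
      refine h2.trans ?_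
      have e : (n:ℝ) * (K * (n * S / (ρ / 2)) * (‖x‖ / (ρ / 2)) ^ m) * ‖x‖ =
          K * n * (2 * n) * 2 ^ m * S * (‖x‖ / ρ) ^ (m + 1) := by
        rw [div_pow, div_pow, div_pow]; field_simp; ring
      rw [e]
      gcongr
      have : (0:ℝ) < 2 ^ (m + 1) := by positivity
      linarith
    · refine (hS x hx).trans ?_
      have h3 : 1 ≤ 2 ^ (m + 1) * (‖x‖ / ρ) ^ (m + 1) := by
        rw [← mul_pow]
        apply one_le_pow₀
        rw [mul_div_assoc', le_div_iff₀ hρ]; linarith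
      calc S = S * 1 := (mul_one S).symm
        _ ≤ S * (2 ^ (m + 1) * (‖x‖ / ρ) ^ (m + 1)) := by gcongr
        _ = 2 ^ (m + 1) * S * (‖x‖ / ρ) ^ (m + 1) := by ring
        _ ≤ _ := by
          gcongr
          have : (0:ℝ) < K * n * (2 * n) * 2 ^ m := by positivity
          linarith


open Filter Topology

lemma coeff_plap (P : MvPolynomial (Fin n) ℝ) (d : Fin n →₀ ℕ) :
    coeff d (plap P) = ∑ i, coeff (d + Finsupp.single i 2) P * ((d i : ℝ) + 2) * ((d i : ℝ) + 1) := by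
  unfold plap
  rw [coeff_sum]
  refine Finset.sum_congr rfl fun i _ => ?_
  rw [coeff_pderiv, coeff_pderiv, add_assoc, ← Finsupp.single_add]
  simp only [Finsupp.add_apply, Finsupp.single_eq_same, Nat.cast_add, Nat.cast_one]
  ring

lemma td_le_iff (P : MvPolynomial (Fin n) ℝ) (N : ℕ) :
    P.totalDegree ≤ N ↔ ∀ d : Fin n →₀ ℕ, N < mdeg d → coeff d P = 0 := by
  constructor
  · intro h d hd
    apply coeff_eq_zero_of_totalDegree_lt
    have : mdeg d = ∑ i ∈ d.support, d i := rfl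
    omega
  · intro h
    rw [totalDegree, Finset.sup_le_iff]
    intro d hd
    by_contra! hcon
    exact (mem_support_iff.1 hd) (h d hcon)

lemma td_plap {P : MvPolynomial (Fin n) ℝ} {N : ℕ} (h : P.totalDegree ≤ N + 2) :
    (plap P).totalDegree ≤ N := by
  rw [td_le_iff] at *
  intro d hd
  rw [coeff_plap]
  refine Finset.sum_eq_zero fun i _ => ?_
  rw [h _ (by rw [mdeg_add, mdeg_single]; omega)]; simp

lemma td_sqP (c : En n) : (sqP c).totalDegree ≤ 2 := by
  unfold sqP
  refine (totalDegree_finset_sum _ _).trans ?_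
  refine Finset.sup_le fun i _ => ?_
  refine (totalDegree_pow _ _).trans ?_
  have : (X i - C (c i) : MvPolynomial (Fin n) ℝ).totalDegree ≤ 1 := by
    refine (totalDegree_sub _ _).trans ?_
    simp
  omega

lemma vanish_open {P : MvPolynomial (Fin n) ℝ} {U : Set (En n)} (hU : IsOpen U) (hne : U.Nonempty)
    (h : ∀ x ∈ U, peval P x = 0) : P = 0 := by
  obtain ⟨x0, hx0⟩ := hne
  have hV : IsOpen ((WithLp.toLp 2 : (Fin n → ℝ) → En n) ⁻¹' U) :=
    hU.preimage (PiLp.continuous_toLp 2 (fun _ : Fin n => ℝ))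
  obtain ⟨ε, hε, hb⟩ := Metric.isOpen_iff.1 hV (fun i => x0 i) hx0
  rw [ball_pi _ hε] at hb
  refine MvPolynomial.funext_set (fun i => ball (x0 i) ε) (fun i => ?_) (fun y hy => ?_)
  · rw [Real.ball_eq_Ioo]; exact Ioo_infinite (by linarith)
  · have := h _ (hb hy)
    simpa [peval] using this

lemma harm_zero {w : MvPolynomial (Fin n) ℝ} {R : ℝ} (hR : 0 < R) (hw : plap w = 0)
    (h0 : ∀ x : En n, ‖x‖ = R → peval w x = 0) : w = 0 := by
  apply vanish_open (U := ball (0 : En n) R) isOpen_ball ⟨0, mem_ball_self hR⟩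
  intro x hx
  have := MPabs (D := ball (0 : En n) R) isOpen_ball isBounded_ball (w := peval w) 0
    (continuous_peval w).continuousOn (fun x _ => W2_peval w x)
    (fun x _ => by rw [lapAt_peval, hw, plap_zero, peval_zero]; simp)
    (fun x hx => by
      rw [frontier_ball _ hR.ne'] at hx
      rw [h0 x (by simpa using hx), peval_zero, abs_zero]) x hx
  rw [peval_zero] at this
  exact abs_eq_zero.1 (le_antisymm this (abs_nonneg _))

lemma dir_poly {R : ℝ} (hR : 0 < R) (p : MvPolynomial (Fin n) ℝ) :
    ∃ h : MvPolynomial (Fin n) ℝ, plap h = 0 ∧ ∀ x : En n, ‖x‖ = R → peval h x = peval p x := by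
  set N := p.totalDegree with hN
  set g : MvPolynomial (Fin n) ℝ := C (R ^ 2) - sqP 0 with hg
  have hge : ∀ x, peval g x = R ^ 2 - ‖x‖ ^ 2 := by
    intro x; rw [hg, peval_sub, peval_C, peval_sqP, sub_zero]
  have hg0 : g ≠ 0 := by
    intro h
    have := hge 0
    rw [h, peval_zero] at this
    simp at this
    exact (pow_pos hR 2).ne this
  have hgd : g.totalDegree ≤ 2 := by
    rw [hg]
    refine (totalDegree_sub _ _).trans ?_
    rw [totalDegree_C]; simp [td_sqP]
  let T0 : MvPolynomial (Fin n) ℝ →ₗ[ℝ] MvPolynomial (Fin n) ℝ :=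
    { toFun := fun q => plap (g * q)
      map_add' := fun a b => by rw [mul_add, plap_add]
      map_smul' := fun c a => by
        rw [smul_eq_C_mul, smul_eq_C_mul, RingHom.id_apply, ← plap_C_mul]
        congr 1; ring }
  have hT : ∀ q ∈ restrictTotalDegree (Fin n) ℝ N, T0 q ∈ restrictTotalDegree (Fin n) ℝ N := by
    intro q hq
    rw [mem_restrictTotalDegree] at *
    apply td_plap
    refine (totalDegree_mul _ _).trans ?_
    omega
  let T := T0.restrict hT
  have hinj : Function.Injective T := by
    rw [← LinearMap.ker_eq_bot, LinearMap.ker_eq_bot']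
    intro q hq
    have h1 : plap (g * q.1) = 0 := congrArg Subtype.val hq
    have h2 := harm_zero hR h1 (fun x hx => by rw [peval_mul, hge, hx]; ring)
    exact Subtype.ext ((mul_eq_zero.1 h2).resolve_left hg0)
  have hsurj : Function.Surjective T := LinearMap.injective_iff_surjective.1 hinj
  obtain ⟨q, hq⟩ := hsurj ⟨plap p, by
    rw [mem_restrictTotalDegree]; exact td_plap (by omega)⟩
  have h1 : plap (g * q.1) = plap p := congrArg Subtype.val hq
  refine ⟨p - g * q.1, by rw [plap_sub, h1, sub_self], fun x hx => ?_⟩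
  rw [peval_sub, peval_mul, hge, hx]; ring

lemma dir_cont {R : ℝ} (hR : 0 < R) (φ : sphere (0 : En n) R → ℝ) (hφ : Continuous φ) {ε : ℝ}
    (hε : 0 < ε) :
    ∃ h : MvPolynomial (Fin n) ℝ, plap h = 0 ∧ ∀ x : sphere (0 : En n) R, |peval h x.1 - φ x| ≤ ε := by
  let F : Fin n → C(sphere (0 : En n) R, ℝ) := fun i => ⟨fun x => x.1 i, by fun_prop⟩
  let Φ : MvPolynomial (Fin n) ℝ →ₐ[ℝ] C(sphere (0 : En n) R, ℝ) := aeval F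
  have hΦ : ∀ P x, Φ P x = peval P x.1 := by
    intro P x
    induction P using MvPolynomial.induction_on with
    | C a => simp [Φ, peval]
    | add p q hp hq => rw [map_add, ContinuousMap.add_apply, hp, hq, peval_add]
    | mul_X p i hp =>
      rw [map_mul, ContinuousMap.mul_apply, hp, peval_mul, peval_X]
      congr 1
      simp [Φ, F]
  have hsep : (Φ.range).SeparatesPoints := by
    intro x y hxy
    obtain ⟨i, hi⟩ : ∃ i, x.1 i ≠ y.1 i := by
      by_contra! hcon
      exact hxy (Subtype.ext (by ext i; exact hcon i))
    refine ⟨Φ (X i), ⟨Φ (X i), ⟨X i, rfl⟩, rfl⟩, ?_⟩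
    rw [hΦ, hΦ, peval_X, peval_X]; exact hi
  obtain ⟨⟨g, ⟨p, hp⟩⟩, hg⟩ := ContinuousMap.exists_mem_subalgebra_near_continuous_of_separatesPoints
    Φ.range hsep φ hφ ε hε
  obtain ⟨h, hh, he⟩ := dir_poly hR p
  refine ⟨h, hh, fun x => ?_⟩
  have h1 := hg x
  simp only at h1
  have h2 : g x = peval p x.1 := by rw [← hΦ, ← hp]; rfl
  rw [h2, Real.norm_eq_abs] at h1
  rw [he x.1 (by simpa using x.2)]
  exact h1.le


open Filter Topology

structure Loc (Ω : Set (En n)) (v : En n → ℝ) (r δ S a b : ℝ) : Prop where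
  op : IsOpen Ω
  hc : ContinuousOn v (closure Ω ∩ ball 0 r)
  h2 : ∀ x ∈ Ω ∩ ball 0 r, W2 v x
  hl : ∀ x ∈ Ω ∩ ball 0 r, |lapAt v x| ≤ a
  hS : ∀ x ∈ Ω ∩ ball 0 r, |v x| ≤ S
  hb : ∀ x ∈ frontier Ω ∩ ball 0 r, |v x| ≤ b
  hin : ∀ x ∈ ball (0 : En n) r, δ * r < xn x → x ∈ Ω
  hout : ∀ x ∈ ball (0 : En n) r, xn x < -(δ * r) → x ∉ Ω

lemma continuous_xn : Continuous (xn : En n → ℝ) := by unfold xn; fun_prop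

lemma Loc.low {Ω : Set (En n)} {v : En n → ℝ} {r δ S a b : ℝ} (H : Loc Ω v r δ S a b)
    {x : En n} (hx : x ∈ closure Ω) (hxr : x ∈ ball (0 : En n) r) : -(δ * r) ≤ xn x := by
  by_contra! hcon
  have hU : IsOpen (ball (0 : En n) r ∩ {y | xn y < -(δ * r)}) :=
    isOpen_ball.inter (isOpen_lt continuous_xn continuous_const)
  obtain ⟨y, hy, hyΩ⟩ := mem_closure_iff.1 hx _ hU ⟨hxr, hcon⟩
  exact H.hout y hy.1 hy.2 hyΩ

lemma Loc.up {Ω : Set (En n)} {v : En n → ℝ} {r δ S a b : ℝ} (H : Loc Ω v r δ S a b)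
    {x : En n} (hx : x ∈ frontier Ω) (hxr : x ∈ ball (0 : En n) r) : xn x ≤ δ * r := by
  by_contra! hcon
  rw [H.op.frontier_eq] at hx
  exact hx.2 (H.hin x hxr hcon)

lemma fr_inter {Ω : Set (En n)} (hΩ : IsOpen Ω) {c x : En n} {ρ : ℝ}
    (hx : x ∈ frontier (Ω ∩ ball c ρ)) :
    ‖x - c‖ ≤ ρ ∧ (x ∈ frontier Ω ∨ (x ∈ Ω ∧ ‖x - c‖ = ρ)) := by
  rw [(hΩ.inter isOpen_ball).frontier_eq] at hx
  have h1 : x ∈ closure Ω := closure_mono inter_subset_left hx.1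
  have h2 : x ∈ closedBall c ρ :=
    closure_minimal (inter_subset_right.trans ball_subset_closedBall) isClosed_closedBall hx.1
  rw [mem_closedBall, dist_eq_norm] at h2
  refine ⟨h2, ?_⟩
  by_cases hxΩ : x ∈ Ω
  · right
    refine ⟨hxΩ, le_antisymm h2 ?_⟩
    by_contra! hcon
    exact hx.2 ⟨hxΩ, by rw [mem_ball, dist_eq_norm]; exact hcon⟩
  · left; rw [hΩ.frontier_eq]; exact ⟨h1, hxΩ⟩

lemma Loc.bdry {Ω : Set (En n)} {v : En n → ℝ} {r δ S a b : ℝ} (H : Loc Ω v r δ S a b)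
    (hr : 0 < r) (hS0 : 0 ≤ S) (ha : 0 ≤ a) (hb0 : 0 ≤ b)
    {y : En n} (hy : y ∈ Ω) (hyr : ‖y‖ ≤ r / 2) :
    |v y| ≤ b + (4 * n * S / r + a * r) * (xn y + δ * r) := by
  have hn := n_one (n := n)
  have hyb : y ∈ ball (0 : En n) r := by rw [mem_ball, dist_zero_right]; linarith
  have hτ0 : 0 ≤ xn y + δ * r := by linarith [H.low (subset_closure hy) hyb]
  set τ := xn y + δ * r with hτ
  rcases le_or_gt (r / 4) τ with hbig | hsm
  · have h1 := H.hS y ⟨hy, hyb⟩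
    have h2 : S ≤ 4 * n * S / r * τ := by
      calc S = 4 * 1 * S / r * (r / 4) := by field_simp
        _ ≤ 4 * n * S / r * τ := by gcongr
    nlinarith [mul_nonneg (mul_nonneg ha hr.le) hτ0]
  · set e : En n := EuclideanSpace.single (lastIdx n) 1 with he
    set x0 : En n := y - τ • e with hx0
    set ρ := r / 4 with hρ
    have hρ0 : 0 < ρ := by positivity
    have hyx : ‖y - x0‖ = τ := by
      rw [hx0, sub_sub_cancel, norm_smul, he]; simp [abs_of_nonneg hτ0]
    have hx0n : x0 (lastIdx n) = -(δ * r) := by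
      rw [hx0, PiLp.sub_apply, he, single_norm_coord, if_pos rfl, hτ]
      simp only [xn]; ring
    have hin : ∀ x : En n, ‖x - x0‖ ≤ ρ → x ∈ ball (0 : En n) r := by
      intro x hx
      rw [mem_ball, dist_zero_right]
      have h1 : ‖x‖ ≤ ‖x - x0‖ + ‖x0 - y‖ + ‖y‖ := by
        calc ‖x‖ = ‖(x - x0) + (x0 - y) + y‖ := by congr 1; abel
          _ ≤ _ := norm_add₃_le
      rw [norm_sub_rev x0 y, hyx] at h1
      linarith
    set q := S * n / ρ ^ 2 + a / 2 with hq
    have hq0 : 0 ≤ q := by positivity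
    set Q := bar (lastIdx n) x0 (x0 (lastIdx n)) b (S / ρ ^ 2) (q * ρ) (-q) with hQ
    have hQe : ∀ x : En n, peval Q x = b + S / ρ ^ 2 * ‖x - x0‖ ^ 2 +
        q * ((xn x + δ * r) * (ρ - (xn x + δ * r))) := by
      intro x; rw [hQ, peval_bar, hx0n]; simp only [xn]; ring
    have hQl : ∀ x, peval (plap Q) x = -a := by
      intro x
      rw [hQ, plap_bar, peval_C, hq]; field_simp; ring
    have hclos : closure (Ω ∩ ball x0 ρ) ⊆ closure Ω ∩ ball 0 r := by
      intro x hx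
      refine ⟨closure_mono inter_subset_left hx, hin x ?_⟩
      have : x ∈ closedBall x0 ρ :=
        closure_minimal (inter_subset_right.trans ball_subset_closedBall) isClosed_closedBall hx
      rwa [mem_closedBall, dist_eq_norm] at this
    have hsub : ∀ x ∈ Ω ∩ ball x0 ρ, x ∈ Ω ∩ ball 0 r := fun x hx =>
      ⟨hx.1, (hclos (subset_closure hx)).2⟩
    have key := MPabs (H.op.inter isOpen_ball) (isBounded_ball.subset inter_subset_right) (w := v) Q
      (H.hc.mono hclos) (fun x hx => H.h2 x (hsub x hx))
      (fun x hx => by rw [hQl, neg_neg]; exact H.hl x (hsub x hx))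
      (fun x hx => by
        obtain ⟨h1, h2⟩ := fr_inter H.op hx
        have hcl := hclos (frontier_subset_closure hx)
        have h3 := H.low hcl.1 hcl.2
        have h4 : xn x + δ * r ≤ ρ := by
          have := coord_le (x - x0) (lastIdx n)
          rw [PiLp.sub_apply, hx0n] at this
          have := (le_abs_self _).trans (this.trans h1)
          simp only [xn]; linarith
        have h5 : 0 ≤ q * ((xn x + δ * r) * (ρ - (xn x + δ * r))) :=
          mul_nonneg hq0 (mul_nonneg (by linarith) (by linarith))
        rw [hQe]
        rcases h2 with h2 | ⟨h2, h6⟩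
        · have := H.hb x ⟨h2, hcl.2⟩
          have h7 : 0 ≤ S / ρ ^ 2 * ‖x - x0‖ ^ 2 := by positivity
          linarith
        · have := H.hS x ⟨h2, hcl.2⟩
          rw [h6, div_mul_cancel₀ _ (by positivity)]
          linarith)
      y ⟨hy, by rw [mem_ball, dist_eq_norm, hyx]; exact hsm⟩
    rw [hQe, hyx, ← hτ] at key
    refine key.trans ?_
    have e1 : q * ρ ≤ 4 * n * S / r + a * r - 0 := by
      rw [hq, hρ]
      have : (S * n / (r / 4) ^ 2 + a / 2) * (r / 4) = 4 * n * S / r + a * r / 8 := by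
        field_simp; ring
      rw [this]; nlinarith [mul_nonneg ha hr.le]
    have e2 : S / ρ ^ 2 * τ ^ 2 ≤ q * τ ^ 2 := by
      gcongr
      rw [hq]
      have : S / ρ ^ 2 ≤ S * n / ρ ^ 2 := by gcongr; nlinarith
      linarith
    nlinarith [mul_le_mul_of_nonneg_right e1 hτ0]

/-- soft threshold -/
def st (t s : ℝ) : ℝ := max (s - t) 0 - max (-s - t) 0

lemma st_cont (t : ℝ) : Continuous (st t) := by unfold st; fun_prop
lemma st_sub {t s : ℝ} (ht : 0 ≤ t) : |st t s - s| ≤ t := by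
  unfold st
  rcases max_cases (s - t) 0 with ⟨h1, h1'⟩ | ⟨h1, h1'⟩ <;>
  rcases max_cases (-s - t) 0 with ⟨h2, h2'⟩ | ⟨h2, h2'⟩ <;>
  rw [h1, h2, abs_le] <;> constructor <;> linarith
lemma st_le {t s c : ℝ} (ht : 0 ≤ t) (hc : 0 ≤ c) (h : |s| ≤ c + t) : |st t s| ≤ c := by
  unfold st
  rw [abs_le] at h
  rcases max_cases (s - t) 0 with ⟨h1, h1'⟩ | ⟨h1, h1'⟩ <;>
  rcases max_cases (-s - t) 0 with ⟨h2, h2'⟩ | ⟨h2, h2'⟩ <;>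
  rw [h1, h2, abs_le] <;> constructor <;> linarith

lemma rpt_zero_norm (j : Fin n) (x : En n) : ‖rpt j 0 x‖ = ‖x‖ := by
  have := rpt_norm j (0 : En n) x
  simpa using this

lemma rpt_coord (j : Fin n) (x : En n) : (rpt j 0 x) j = - x j := by simp [rpt]

lemma rpt_rpt (j : Fin n) (x : En n) : rpt j 0 (rpt j 0 x) = x := by
  ext i
  by_cases hi : i = j
  · subst hi; simp [rpt]
  · simp [rpt, hi]

lemma rpt_fix (j : Fin n) (x : En n) (h : x j = 0) : rpt j 0 x = x := by
  ext i
  by_cases hi : i = j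
  · subst hi; simp [rpt, h]
  · simp [rpt, hi]

lemma coeff_reflP (j : Fin n) (P : MvPolynomial (Fin n) ℝ) :
    ∀ d, coeff d (reflP j 0 P) = (-1) ^ (d j) * coeff d P := by
  unfold reflP
  induction P using MvPolynomial.induction_on with
  | C c =>
    intro d
    simp only [algHom_C, algebraMap_eq, coeff_C]
    split_ifs with h
    · subst h; simp
    · simp
  | add p q hp hq => intro d; simp only [map_add, coeff_add, hp, hq]; ring
  | mul_X p k hp =>
    intro d
    rw [map_mul, aeval_X]
    by_cases hk : k = j
    · subst hk
      simp only [mul_zero, C_0, zero_sub] at hp ⊢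
      simp only [if_true, mul_neg, coeff_neg, coeff_mul_X']
      split_ifs with h
      · rw [hp]
        have h1 : d k ≠ 0 := by simpa using h
        obtain ⟨m, hm⟩ := Nat.exists_eq_succ_of_ne_zero h1
        simp [hm, pow_succ]
      · simp
    · simp only [hk, if_false, coeff_mul_X']
      split_ifs with h
      · rw [hp]
        have : (d - (Finsupp.single k 1 : Fin n →₀ ℕ)) j = d j := by
          simp [hk]
        rw [this]
      · simp

theorem Loc.approx {Ω : Set (En n)} {v : En n → ℝ} {r δ S a b ε : ℝ} (H : Loc Ω v r δ S a b)
    (hr : 0 < r) (hδ : 0 < δ) (hS0 : 0 ≤ S) (ha : 0 ≤ a) (hb0 : 0 ≤ b) (hε : 0 < ε)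
    {L : ℝ} (hL : L = 4 * n * S / r + a * r) :
    ∃ h : MvPolynomial (Fin n) ℝ, plap h = 0 ∧ (∀ d, Even (d (lastIdx n)) → coeff d h = 0) ∧
      (∀ x, peval h (rpt (lastIdx n) 0 x) = - peval h x) ∧
      (∀ x : En n, ‖x‖ ≤ r / 2 → |peval h x| ≤ L * |xn x| + 2 * ε) ∧
      (∀ x ∈ Ω ∩ ball 0 (r / 2), |v x - peval h x| ≤ b + 3 * (L * (δ * r)) + a * r ^ 2 + 2 * ε) := by
  have hn := n_one (n := n)
  have hL0 : 0 ≤ L := by rw [hL]; positivity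
  have hδr : 0 < δ * r := by positivity
  set t := b + 3 * (L * (δ * r)) with ht
  have ht0 : 0 ≤ t := by positivity
  have hbd : ∀ y ∈ Ω, ‖y‖ ≤ r / 2 → |v y| ≤ b + L * (xn y + δ * r) := by
    intro y h1 h2; rw [hL]; exact H.bdry hr hS0 ha hb0 h1 h2
  set R := r / 2 with hR
  have hR0 : 0 < R := by positivity
  have hRr : R < r := by rw [hR]; linarith
  have hsb : ∀ x : En n, ‖x‖ ≤ R → x ∈ ball (0 : En n) r := fun x hx => by
    rw [mem_ball, dist_zero_right]; linarith
  have hhigh : ∀ x : En n, ‖x‖ ≤ R → 2 * (δ * r) ≤ xn x → x ∈ Ω := fun x hx h =>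
    H.hin x (hsb x hx) (by linarith)
  classical
  set φ : En n → ℝ := fun x => if xn x ≤ 2 * (δ * r) then 0 else st t (v x) with hφ
  have hφc : Continuous (fun x : sphere (0 : En n) R => φ x.1) := by
    apply continuous_if_le (f := fun x : sphere (0 : En n) R => xn x.1)
      (g := fun _ => 2 * (δ * r)) (f' := fun _ => (0:ℝ)) (g' := fun x => st t (v x.1))
      (continuous_xn.comp continuous_subtype_val) continuous_const continuousOn_const
    · intro x hx
      have hxn : ‖x.1‖ ≤ R := by have := x.2; simp only [mem_sphere, dist_zero_right] at this; exact this.le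
      have hxΩ := hhigh x.1 hxn hx
      have hca : ContinuousAt v x.1 := by
        have : ContinuousOn v (Ω ∩ ball 0 r) := H.hc.mono (inter_subset_inter_left _ subset_closure)
        exact this.continuousAt ((H.op.inter isOpen_ball).mem_nhds ⟨hxΩ, hsb _ hxn⟩)
      have : ContinuousAt (fun x : sphere (0 : En n) R => v x.1) x :=
        ContinuousAt.comp (f := Subtype.val) hca continuous_subtype_val.continuousAt
      exact ((st_cont t).continuousAt.comp this).continuousWithinAt
    · intro x hx
      have hxn : ‖x.1‖ ≤ R := by have := x.2; simp only [mem_sphere, dist_zero_right] at this; exact this.le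
      have h1 := hbd x.1 (hhigh x.1 hxn hx.ge) hxn
      have h2 : |st t (v x.1)| ≤ 0 := by
        apply st_le ht0 le_rfl
        rw [ht]; rw [hx] at h1; linarith
      exact (abs_eq_zero.1 (le_antisymm h2 (abs_nonneg _))).symm
  obtain ⟨h0, hh0, happ⟩ := dir_cont hR0 (fun x => φ x.1) hφc hε
  have happ' : ∀ x : En n, ‖x‖ = R → |peval h0 x - φ x| ≤ ε := fun x hx =>
    happ ⟨x, by simpa using hx⟩
  set h := h0 - reflP (lastIdx n) 0 h0 with hh
  have hhe : ∀ x, peval h x = peval h0 x - peval h0 (rpt (lastIdx n) 0 x) := fun x => by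
    rw [hh, peval_sub, peval_reflP]
  have hodd : ∀ x, peval h (rpt (lastIdx n) 0 x) = - peval h x := fun x => by
    rw [hhe, hhe, rpt_rpt]; ring
  have hlap : plap h = 0 := by rw [hh, plap_sub, plap_reflP, hh0, reflP_zero, sub_zero]
  have hsph : ∀ x : En n, ‖x‖ = R → 0 ≤ xn x → |peval h x - φ x| ≤ 2 * ε := by
    intro x hx hxn
    have h1 := happ' x hx
    have h2 := happ' (rpt (lastIdx n) 0 x) (by rw [rpt_zero_norm, hx])
    have h3 : φ (rpt (lastIdx n) 0 x) = 0 := by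
      rw [hφ]; simp only
      rw [if_pos]
      unfold xn at *; rw [rpt_coord]; linarith
    rw [h3, sub_zero] at h2
    rw [hhe]
    rw [abs_le] at *
    constructor <;> linarith
  have hφL : ∀ x : En n, ‖x‖ = R → 0 ≤ xn x → |φ x| ≤ L * xn x := by
    intro x hx hxn
    rw [hφ]; simp only
    split_ifs with hc
    · rw [abs_zero]; positivity
    · apply st_le ht0 (by positivity)
      have := hbd x (hhigh x hx.le (le_of_not_ge hc)) hx.le
      rw [ht]; nlinarith [mul_nonneg hL0 hδr.le]
  have hsphL : ∀ x : En n, ‖x‖ = R → 0 ≤ xn x → |peval h x| ≤ L * xn x + 2 * ε := by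
    intro x hx hxn
    have h1 := hsph x hx hxn
    have h2 := hφL x hx hxn
    have := abs_sub_abs_le_abs_sub (peval h x) (φ x)
    linarith
  have hflat : ∀ x : En n, xn x = 0 → peval h x = 0 := by
    intro x hx
    have := hodd x
    rw [rpt_fix _ _ hx] at this; linarith
  set Q := bar (lastIdx n) (0 : En n) 0 (2 * ε) 0 L 0 with hQ
  have hQe : ∀ x, peval Q x = L * xn x + 2 * ε := fun x => by
    rw [hQ, peval_bar]; simp only [xn]; ring
  have hup : ∀ x : En n, ‖x‖ ≤ R → 0 ≤ xn x → |peval h x| ≤ L * xn x + 2 * ε := by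
    intro x hx hxn
    rcases hx.eq_or_lt with hx | hx
    · exact hsphL x hx hxn
    rcases hxn.eq_or_lt with hxn | hxn
    · rw [hflat x hxn.symm, ← hxn]; simp; exact hε.le
    rw [← hQe]
    have hz : ∀ y : En n, ((0 : En n) (lastIdx n) < y (lastIdx n)) = (0 < xn y) := fun y => by
      simp [xn]
    refine MPabs (half_open (lastIdx n) (0 : En n) R) (isBounded_ball.subset inter_subset_left) Q
      (continuous_peval h).continuousOn (fun x _ => W2_peval h x) ?_ ?_ x ⟨by simpa using hx, by
        simpa [xn] using hxn⟩
    · intro y _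
      rw [lapAt_peval, hlap, peval_zero, hQ, plap_bar, peval_C]; simp
    · intro y hy
      obtain ⟨h1, h2, h3⟩ := half_frontier hy
      have h2' : 0 ≤ xn y := by simpa [xn] using h2
      rw [hQe]
      rcases h3 with h3 | h3
      · exact hsphL y (by simpa using h3) h2'
      · rw [hflat y (by simpa [xn] using h3), abs_zero]; positivity
  have hall : ∀ x : En n, ‖x‖ ≤ R → |peval h x| ≤ L * |xn x| + 2 * ε := by
    intro x hx
    rcases le_total 0 (xn x) with h1 | h1
    · rw [abs_of_nonneg h1]; exact hup x hx h1
    · have e : xn (rpt (lastIdx n) 0 x) = - xn x := by unfold xn; exact rpt_coord _ _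
      have := hup (rpt (lastIdx n) 0 x) (by rw [rpt_zero_norm]; exact hx) (by rw [e]; linarith)
      rw [hodd, abs_neg, e] at this
      rw [abs_of_nonpos h1]; exact this
  refine ⟨h, hlap, ?_, hodd, hall, ?_⟩
  · intro d hd
    rw [hh, coeff_sub, coeff_reflP, hd.neg_one_pow]; ring
  · intro x hx
    set c := a / (2 * n) with hcdef
    have hc0 : 0 ≤ c := by positivity
    set Q2 := bar (lastIdx n) (0 : En n) 0 (t + 2 * ε + c * R ^ 2) (-c) 0 0 with hQ2
    have hQ2e : ∀ x, peval Q2 x = t + 2 * ε + c * (R ^ 2 - ‖x‖ ^ 2) := fun x => by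
      rw [hQ2, peval_bar]; simp; ring
    have hclos : closure (Ω ∩ ball 0 R) ⊆ closure Ω ∩ ball 0 r := by
      intro x hx
      refine ⟨closure_mono inter_subset_left hx, hsb x ?_⟩
      have : x ∈ closedBall (0 : En n) R :=
        closure_minimal (inter_subset_right.trans ball_subset_closedBall) isClosed_closedBall hx
      simpa using this
    have hsub : ∀ x ∈ Ω ∩ ball 0 R, x ∈ Ω ∩ ball 0 r := fun x hx =>
      ⟨hx.1, (hclos (subset_closure hx)).2⟩
    have key := MPabs (H.op.inter isOpen_ball) (isBounded_ball.subset inter_subset_right)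
      (w := fun y => v y - peval h y) Q2
      ((H.hc.mono hclos).sub (continuous_peval h).continuousOn)
      (fun x hx => ((H.h2 x (hsub x hx)).sub (W2_peval h x)).1)
      (fun x hx => by
        rw [((H.h2 x (hsub x hx)).sub (W2_peval h x)).2, lapAt_peval, hlap, peval_zero, sub_zero,
          hQ2, plap_bar, peval_C]
        refine (H.hl x (hsub x hx)).trans (le_of_eq ?_)
        rw [hcdef]; field_simp; try ring)
      (fun x hx => by
        obtain ⟨h1, h2⟩ := fr_inter H.op hx
        rw [sub_zero] at h1 h2
        have hcl := hclos (frontier_subset_closure hx)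
        have h3 := H.low hcl.1 hcl.2
        have h4 : 0 ≤ c * (R ^ 2 - ‖x‖ ^ 2) :=
          mul_nonneg hc0 (sub_nonneg.2 (pow_le_pow_left₀ (norm_nonneg x) h1 2))
        rw [hQ2e]
        have habs := abs_sub (v x) (peval h x)
        have hhx := hall x h1
        have hLd : 0 ≤ L * (δ * r) := mul_nonneg hL0 hδr.le
        suffices |v x - peval h x| ≤ t + 2 * ε by linarith
        rcases h2 with h2 | ⟨h2, h6⟩
        · have h7 := H.hb x ⟨h2, hcl.2⟩
          have h8 := H.up h2 hcl.2
          have h9 : L * |xn x| ≤ L * (δ * r) := by gcongr; exact abs_le.2 ⟨h3, h8⟩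
          linarith
        · have hv := hbd x h2 h1
          rcases le_total 0 (xn x) with hp | hp
          · have h7 := hsph x h6 hp
            have h8 : |φ x - v x| ≤ t := by
              rw [hφ]; simp only
              split_ifs with hc
              · rw [zero_sub, abs_neg, ht]
                nlinarith
              · exact st_sub ht0
            have := abs_sub_le (peval h x) (φ x) (v x)
            rw [abs_sub_comm]; linarith
          · have h9 : L * |xn x| ≤ L * (δ * r) := by gcongr; exact abs_le.2 ⟨h3, by linarith⟩
            have h10 : L * (xn x + δ * r) ≤ L * (δ * r) := by gcongr; linarith
            linarith)
      x hx
    rw [hQ2e] at key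
    refine key.trans ?_
    have hc1 : c ≤ a := by
      rw [hcdef, div_le_iff₀ (by positivity)]; nlinarith
    have hRR : R ^ 2 - ‖x‖ ^ 2 ≤ r ^ 2 := by nlinarith [sq_nonneg ‖x‖]
    have : c * (R ^ 2 - ‖x‖ ^ 2) ≤ a * r ^ 2 := by
      calc c * (R ^ 2 - ‖x‖ ^ 2) ≤ c * r ^ 2 := by gcongr
        _ ≤ a * r ^ 2 := by gcongr
    linarith


open Filter Topology

def Iset (n m : ℕ) : Finset (Fin n →₀ ℕ) := (Finsupp.finite_of_degree_le m).toFinset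

lemma mem_Iset {m : ℕ} {d : Fin n →₀ ℕ} : d ∈ Iset n m ↔ mdeg d ≤ m := by
  simp [Iset, mdeg_eq]

def mkP (m : ℕ) (c : (Fin n →₀ ℕ) → ℝ) : MvPolynomial (Fin n) ℝ :=
  ∑ d ∈ Iset n m, monomial d (c d)

lemma coeff_mkP (m : ℕ) (c : (Fin n →₀ ℕ) → ℝ) (d : Fin n →₀ ℕ) :
    coeff d (mkP m c) = if mdeg d ≤ m then c d else 0 := by
  classical
  unfold mkP
  rw [coeff_sum]
  simp only [coeff_monomial]
  rw [Finset.sum_ite_eq']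
  simp [mem_Iset]

lemma mono_le (d : Fin n →₀ ℕ) (x : En n) :
    |d.prod (fun i e => (x i) ^ e)| ≤ ‖x‖ ^ mdeg d := by
  rw [Finsupp.prod, Finset.abs_prod]
  calc _ ≤ ∏ i ∈ d.support, ‖x‖ ^ (d i) := by
        apply Finset.prod_le_prod
        · intros; positivity
        · intro i _; rw [abs_pow]; gcongr; exact coord_le x i
    _ = _ := by rw [Finset.prod_pow_eq_pow_sum]; rfl

lemma peval_monomial (d : Fin n →₀ ℕ) (c : ℝ) (x : En n) :
    peval (monomial d c) x = c * d.prod (fun i e => (x i) ^ e) := by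
  unfold peval; rw [eval_monomial]

lemma mkP_bound {m : ℕ} {c : (Fin n →₀ ℕ) → ℝ} {x : En n} {B R : ℝ}
    (h : ∀ d, mdeg d ≤ m → |c d| * R ^ mdeg d ≤ B) (hx : ‖x‖ ≤ R) :
    |peval (mkP m c) x| ≤ (Iset n m).card * B := by
  unfold mkP
  rw [peval_sum]
  refine (Finset.abs_sum_le_sum_abs _ _).trans ?_
  rw [← nsmul_eq_mul]
  apply Finset.sum_le_card_nsmul
  intro d hd
  rw [peval_monomial, abs_mul]
  refine le_trans ?_ (h d (mem_Iset.1 hd))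
  gcongr
  exact (mono_le d x).trans (by gcongr)

def tr (m : ℕ) (P : MvPolynomial (Fin n) ℝ) : MvPolynomial (Fin n) ℝ := mkP m (fun d => coeff d P)

lemma coeff_tr (m : ℕ) (P : MvPolynomial (Fin n) ℝ) (d : Fin n →₀ ℕ) :
    coeff d (tr m P) = if mdeg d ≤ m then coeff d P else 0 := coeff_mkP _ _ _

lemma plap_tr (m : ℕ) (P : MvPolynomial (Fin n) ℝ) (h : plap P = 0) : plap (tr m P) = 0 := by
  ext d
  rw [coeff_plap, coeff_zero]
  by_cases hd : mdeg d + 2 ≤ m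
  · have := coeff_plap P d
    rw [h, coeff_zero] at this
    rw [this]
    apply Finset.sum_congr rfl
    intro i _
    rw [coeff_tr, if_pos (by rw [mdeg_add, mdeg_single]; exact hd)]
  · apply Finset.sum_eq_zero
    intro i _
    rw [coeff_tr, if_neg (by rw [mdeg_add, mdeg_single]; exact hd)]
    ring

lemma pow_sc {ρ0 τ : ℝ} (h : 0 < ρ0) (i : ℕ) :
    (ρ0 / 2 ^ i) ^ τ = ρ0 ^ τ * ((2:ℝ) ^ (-τ)) ^ i := by
  rw [Real.div_rpow h.le (by positivity), ← Real.rpow_natCast, ← Real.rpow_natCast,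
    ← Real.rpow_mul (by norm_num), ← Real.rpow_mul (by norm_num), div_eq_mul_inv,
    ← Real.rpow_neg (by norm_num)]
  congr 2; ring

theorem campanato (m : ℕ) (σ : ℝ) (h1 : (m:ℝ) < σ) (h2 : σ < m + 1) :
    ∃ K > 0, ∀ (h : ℕ → MvPolynomial (Fin n) ℝ) (ρ0 E : ℝ), 0 < ρ0 → 0 ≤ E → h 0 = 0 →
      (∀ i, plap (h i) = 0) →
      (∀ i, ∀ x ∈ closedBall (0 : En n) (ρ0 / 2 ^ i),
        |peval (h (i+1) - h i) x| ≤ E * (ρ0 / 2 ^ i) ^ σ) →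
      ∃ P : MvPolynomial (Fin n) ℝ, plap P = 0 ∧ (∀ d, m < mdeg d → coeff d P = 0) ∧
        (∀ d, (∀ i, coeff d (h i) = 0) → coeff d P = 0) ∧
        (∀ d, |coeff d P| ≤ K * E * ρ0 ^ (σ - mdeg d)) ∧
        (∀ i, ∀ x ∈ closedBall (0 : En n) (ρ0 / 2 ^ i),
          |peval (h i) x - peval P x| ≤ K * E * (ρ0 / 2 ^ i) ^ σ) := by
  choose Kc hKc hce using fun l => coeff_est (n := n) l
  obtain ⟨Kt, hKt, hte⟩ := tail_est (n := n) (m + 1)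
  set K1 := ∑ l ∈ Finset.range (m+1), Kc l with hK1
  have hK1l : ∀ l ≤ m, Kc l ≤ K1 := fun l hl =>
    Finset.single_le_sum (f := Kc) (fun i _ => (hKc i).le) (Finset.mem_range.2 (by omega))
  have hK1p : 0 < K1 := (hKc 0).trans_le (hK1l 0 (by omega))
  set q0 := (2:ℝ) ^ (-(σ - m)) with hq0
  have hq01 : q0 < 1 := Real.rpow_lt_one_of_one_lt_of_neg (by norm_num) (by linarith)
  have hq0p : 0 < q0 := by positivity
  set q1 := (2:ℝ) ^ (σ - m - 1) with hq1
  have hq11 : q1 < 1 := Real.rpow_lt_one_of_one_lt_of_neg (by norm_num) (by linarith)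
  have hq1p : 0 < q1 := by positivity
  set N : ℝ := ((Iset n m).card : ℝ) with hN
  have hN0 : 0 ≤ N := by positivity
  set K2 := K1 / (1 - q0) with hK2
  have hq0' : 0 < 1 - q0 := by linarith
  have hq1' : 0 < 1 - q1 := by linarith
  have hK2p : 0 < K2 := by positivity
  set c1 := q1 / (1 - q1) with hc1
  have hc1p : 0 < c1 := by positivity
  set K3 := Kt * (1 + N * K1) with hK3
  have hK3p : 0 < K3 := by positivity
  refine ⟨K2 + N * K2 + K3 * c1, by positivity, ?_⟩
  intro h ρ0 E hρ0 hE hh0 hhl hd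
  have hρ : ∀ i : ℕ, 0 < ρ0 / 2 ^ i := fun i => by positivity
  -- coefficient bounds
  have hco : ∀ d, mdeg d ≤ m → ∀ i, |coeff d (h (i+1) - h i)| ≤ K1 * E * (ρ0 / 2^i) ^ (σ - mdeg d) := by
    intro d hdm i
    have := hce (mdeg d) d rfl (h (i+1) - h i) (ρ0 / 2^i) (E * (ρ0 / 2 ^ i) ^ σ)
      (by rw [plap_sub, hhl, hhl, sub_zero]) (hρ i) (hd i)
    refine this.trans ?_
    rw [Real.rpow_sub (hρ i), Real.rpow_natCast]
    have e : Kc (mdeg d) * (E * (ρ0 / 2 ^ i) ^ σ) / (ρ0 / 2 ^ i) ^ mdeg d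
        = Kc (mdeg d) * (E * ((ρ0 / 2 ^ i) ^ σ / (ρ0 / 2 ^ i) ^ mdeg d)) := by ring
    rw [e, mul_assoc]
    have := hK1l _ hdm
    have : 0 ≤ (ρ0 / 2 ^ i) ^ σ / (ρ0 / 2 ^ i) ^ mdeg d := by positivity
    gcongr
  have hgeo : ∀ d, mdeg d ≤ m → ∀ i, dist (coeff d (h i)) (coeff d (h (i+1))) ≤
      (K1 * E * ρ0 ^ (σ - mdeg d)) * ((2:ℝ) ^ (-(σ - mdeg d))) ^ i := by
    intro d hdm i
    rw [dist_comm, Real.dist_eq, ← coeff_sub]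
    refine (hco d hdm i).trans (le_of_eq ?_)
    rw [pow_sc hρ0]; ring
  have hqd : ∀ d : Fin n →₀ ℕ, mdeg d ≤ m → (2:ℝ) ^ (-(σ - mdeg d)) ≤ q0 := by
    intro d hdm
    have : (mdeg d : ℝ) ≤ m := by exact_mod_cast hdm
    exact Real.rpow_le_rpow_of_exponent_le (by norm_num) (by linarith)
  have hex : ∀ d, ∃ c, mdeg d ≤ m → Tendsto (fun i => coeff d (h i)) atTop (𝓝 c) := by
    intro d
    by_cases hdm : mdeg d ≤ m
    · obtain ⟨c, hc⟩ := cauchySeq_tendsto_of_complete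
        (cauchySeq_of_le_geometric _ _ ((hqd d hdm).trans_lt hq01) (hgeo d hdm))
      exact ⟨c, fun _ => hc⟩
    · exact ⟨0, fun h => absurd h hdm⟩
  choose c hc using hex
  have hcd : ∀ d, mdeg d ≤ m → ∀ i, |coeff d (h i) - c d| ≤ K2 * E * (ρ0 / 2^i) ^ (σ - mdeg d) := by
    intro d hdm i
    have := dist_le_of_le_geometric_of_tendsto _ _ ((hqd d hdm).trans_lt hq01) (hgeo d hdm)
      (hc d hdm) i
    rw [Real.dist_eq] at this
    refine this.trans ?_
    rw [hK2]
    have e : K1 / (1 - q0) * E * (ρ0 / 2 ^ i) ^ (σ - ↑(mdeg d)) =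
      K1 * E * ρ0 ^ (σ - mdeg d) * ((2:ℝ) ^ (-(σ - mdeg d))) ^ i / (1 - q0) := by
      rw [pow_sc hρ0]; ring
    rw [e]
    have := hqd d hdm
    gcongr
  refine ⟨mkP m c, ?_, ?_, ?_, ?_, ?_⟩
  · have hlim : ∀ d, Tendsto (fun i => coeff d (tr m (h i))) atTop (𝓝 (coeff d (mkP m c))) := by
      intro d
      rw [coeff_mkP]
      simp only [coeff_tr]
      split_ifs with hdm
      · exact hc d hdm
      · exact tendsto_const_nhds
    ext d
    rw [coeff_zero, coeff_plap]
    have : Tendsto (fun i => coeff d (plap (tr m (h i)))) atTop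
        (𝓝 (∑ i, coeff (d + Finsupp.single i 2) (mkP m c) * (d i + 2) * (d i + 1))) := by
      simp only [coeff_plap]
      refine tendsto_finset_sum _ fun i _ => ?_
      exact ((hlim _).mul_const _).mul_const _
    simp only [plap_tr _ _ (hhl _), coeff_zero] at this
    exact tendsto_nhds_unique this tendsto_const_nhds
  · intro d hdm
    rw [coeff_mkP, if_neg (by omega)]
  · intro d hd0
    rw [coeff_mkP]
    split_ifs with hdm
    · have := hc d hdm
      simp only [hd0] at this
      exact tendsto_nhds_unique this tendsto_const_nhds
    · rfl
  · intro d
    have hp : 0 ≤ E * ρ0 ^ (σ - mdeg d) := by positivity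
    rw [coeff_mkP]
    split_ifs with hdm
    · have := hcd d hdm 0
      rw [hh0, coeff_zero, zero_sub, abs_neg, pow_zero, div_one] at this
      refine this.trans ?_
      have : 0 ≤ N * K2 + K3 * c1 := by positivity
      nlinarith
    · rw [abs_zero]; positivity
  · intro i x hx
    rw [mem_closedBall, dist_zero_right] at hx
    -- tails
    have htl : ∀ j, ∀ x, ‖x‖ ≤ ρ0 / 2^j → |peval ((h (j+1) - h j) - tr m (h (j+1) - h j)) x| ≤
        K3 * E * (ρ0 / 2^j) ^ σ * (‖x‖ / (ρ0 / 2^j)) ^ (m+1) := by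
      intro j x hx
      have := hte ((h (j+1) - h j) - tr m (h (j+1) - h j)) (ρ0 / 2^j)
        ((1 + N * K1) * E * (ρ0 / 2^j) ^ σ)
        (by rw [plap_sub, plap_tr] <;> simp [plap_sub, hhl]) (hρ j)
        (by
          intro d hdm
          rw [coeff_sub, coeff_tr, if_pos (by omega), sub_self])
        (by
          intro y hy
          rw [peval_sub]
          refine (abs_sub _ _).trans ?_
          have b1 := hd j y hy
          rw [mem_closedBall, dist_zero_right] at hy
          have b2 : |peval (tr m (h (j+1) - h j)) y| ≤ N * (K1 * E * (ρ0 / 2^j) ^ σ) := by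
            refine mkP_bound (R := ρ0 / 2^j) ?_ hy
            intro d hdm
            calc _ ≤ K1 * E * (ρ0 / 2^j) ^ (σ - mdeg d) * (ρ0 / 2^j) ^ mdeg d := by
                  gcongr; exact hco d hdm j
              _ = _ := by
                rw [Real.rpow_sub (hρ j), Real.rpow_natCast]
                have := hρ j
                field_simp
          linarith)
        x (by simpa using hx)
      refine this.trans (le_of_eq ?_)
      rw [hK3]; ring
    have hsum : ∀ i, ∀ x, ‖x‖ ≤ ρ0 / 2^i → |peval (h i - tr m (h i)) x| ≤
        K3 * E * c1 * (ρ0 / 2^i) ^ (σ - m - 1) * ‖x‖ ^ (m+1) := by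
      intro i
      induction i with
      | zero =>
        intro x hx
        have : tr m (0 : MvPolynomial (Fin n) ℝ) = 0 := by
          ext d; rw [coeff_tr]; simp
        rw [hh0, this, sub_zero, peval_zero, abs_zero]; positivity
      | succ i ih =>
        intro x hx
        have hx' : ‖x‖ ≤ ρ0 / 2^i := hx.trans (by
          gcongr
          · norm_num
          · omega)
        have e : h (i+1) - tr m (h (i+1)) = (h i - tr m (h i)) +
            ((h (i+1) - h i) - tr m (h (i+1) - h i)) := by
          ext d
          simp only [coeff_sub, coeff_add, coeff_tr]
          split_ifs <;> ring
        rw [e, peval_add]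
        refine (abs_add_le _ _).trans ?_
        refine (add_le_add (ih x hx') (htl i x hx')).trans ?_
        have e1 : (ρ0 / 2^i) ^ σ * (‖x‖ / (ρ0 / 2^i)) ^ (m+1) =
            (ρ0 / 2^i) ^ (σ - m - 1) * ‖x‖ ^ (m+1) := by
          rw [div_pow, show σ - m - 1 = σ - ((m+1 : ℕ) : ℝ) by push_cast; ring,
            Real.rpow_sub (hρ i), Real.rpow_natCast]
          ring
        have e2 : (ρ0 / 2^i) ^ (σ - m - 1) = q1 * (ρ0 / 2^(i+1)) ^ (σ - m - 1) := by
          rw [pow_sc hρ0, pow_sc hρ0, pow_succ, hq1, Real.rpow_neg (by norm_num)]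
          field_simp
        rw [mul_assoc (K3 * E) ((ρ0 / 2 ^ i) ^ σ), e1, e2]
        apply le_of_eq
        have e3 : c1 * q1 + q1 = c1 := by
          rw [hc1]; field_simp; ring
        linear_combination (K3 * E * (ρ0 / 2 ^ (i+1)) ^ (σ - m - 1) * ‖x‖ ^ (m+1)) * e3
    have hlow : |peval (tr m (h i) - mkP m c) x| ≤ N * (K2 * E * (ρ0 / 2^i) ^ σ) := by
      have e : tr m (h i) - mkP m c = mkP m (fun d => coeff d (h i) - c d) := by
        ext d; simp only [coeff_sub, coeff_tr, coeff_mkP]; split_ifs <;> ring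
      rw [e]
      refine mkP_bound (R := ρ0 / 2^i) ?_ hx
      intro d hdm
      calc _ ≤ K2 * E * (ρ0 / 2^i) ^ (σ - mdeg d) * (ρ0 / 2^i) ^ mdeg d := by
            gcongr; exact hcd d hdm i
        _ = _ := by
          rw [Real.rpow_sub (hρ i), Real.rpow_natCast]
          have := hρ i
          field_simp
    have h3 := hsum i x hx
    have h4 : (ρ0 / 2^i) ^ (σ - m - 1) * ‖x‖ ^ (m+1) ≤ (ρ0 / 2^i) ^ σ := by
      calc _ ≤ (ρ0 / 2^i) ^ (σ - m - 1) * (ρ0 / 2^i) ^ (m+1) := by gcongr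
        _ = _ := by
          rw [show σ - m - 1 = σ - ((m+1 : ℕ) : ℝ) by push_cast; ring,
            Real.rpow_sub (hρ i), Real.rpow_natCast]
          have := hρ i
          field_simp
    have h5 : K3 * E * c1 * ((ρ0 / 2^i) ^ (σ - m - 1) * ‖x‖ ^ (m+1)) ≤
        K3 * E * c1 * (ρ0 / 2^i) ^ σ := by gcongr
    have e : peval (h i) x - peval (mkP m c) x = peval (h i - tr m (h i)) x +
        peval (tr m (h i) - mkP m c) x := by
      rw [peval_sub, peval_sub]; ring
    rw [e]
    refine (abs_add_le _ _).trans ?_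
    have h6 : 0 ≤ K2 * E * (ρ0 / 2^i) ^ σ := by positivity
    nlinarith


open Filter Topology

structure Dom (Ω : Set (En n)) (v : En n → ℝ) (A κ α M : ℝ) : Prop where
  op : IsOpen Ω
  h0 : (0 : En n) ∉ Ω
  hc : ContinuousOn v (closure Ω ∩ ball 0 1)
  h2 : ∀ x ∈ Ω ∩ ball 0 1, W2 v x
  hl : ∀ x ∈ Ω ∩ ball 0 1, |lapAt v x| ≤ A * ‖x‖ ^ (κ - 2)
  hb : ∀ x ∈ frontier Ω ∩ ball 0 1, |v x| ≤ A * ‖x‖ ^ κ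
  hin : ∀ x : En n, ‖x‖ < 1 → M * ‖x‖ ^ (1 + α) < xn x → x ∈ Ω
  hout : ∀ x : En n, ‖x‖ < 1 → xn x < -(M * ‖x‖ ^ (1 + α)) → x ∉ Ω

lemma Dom.scale {Ω : Set (En n)} {v : En n → ℝ} {A κ α M s σ B : ℝ} (H : Dom Ω v A κ α M)
    (hα : 0 < α) (hκ : 2 ≤ κ) (hM : 1 ≤ M) (hs : 0 ≤ s) (hσs : σ ≤ s + α) (hsσ : s ≤ σ) (hσκ : σ ≤ κ)
    (hB : 0 < B) (hA : 0 ≤ A) (hAB : A ≤ B)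
    (hv : ∀ x ∈ Ω ∩ ball 0 1, |v x| ≤ B * ‖x‖ ^ s)
    {r : ℝ} (hr : 0 < r) (hr1 : r ≤ 1) {E1 : ℝ} (hE1 : E1 = 4 + 4 * M * (4 * n + 1)) :
    ∃ h : MvPolynomial (Fin n) ℝ, plap h = 0 ∧ (∀ d, Even (d (lastIdx n)) → coeff d h = 0) ∧
      (∀ x, peval h (rpt (lastIdx n) 0 x) = - peval h x) ∧
      (∀ x : En n, ‖x‖ ≤ r / 2 → |xn x| ≤ 4 * M * r ^ (1 + α) → |peval h x| ≤ E1 * B * r ^ σ) ∧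
      (∀ x : En n, ‖x‖ ≤ r / 2 → |peval h x| ≤ E1 * B * r ^ s) ∧
      (∀ x ∈ Ω ∩ ball 0 (r / 2), |v x - peval h x| ≤ E1 * B * r ^ σ) := by
  have hM0 : 0 < M := by linarith
  have hsub : ball (0 : En n) r ⊆ ball 0 1 := ball_subset_ball hr1
  have hnr : ∀ x ∈ ball (0 : En n) r, ‖x‖ ≤ r := fun x hx => by
    rw [mem_ball_zero_iff] at hx; exact hx.le
  have hδr : M * r ^ α * r = M * r ^ (1 + α) := by
    rw [add_comm, Real.rpow_add hr, Real.rpow_one]; ring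
  have hLoc : Loc Ω v r (M * r ^ α) (B * r ^ s) (A * r ^ (κ - 2)) (A * r ^ κ) := by
    refine ⟨H.op, H.hc.mono (inter_subset_inter_right _ hsub), fun x hx => H.h2 x ⟨hx.1, hsub hx.2⟩,
      fun x hx => ?_, fun x hx => ?_, fun x hx => ?_, fun x hx hx2 => ?_, fun x hx hx2 => ?_⟩
    · refine (H.hl x ⟨hx.1, hsub hx.2⟩).trans ?_
      have := hnr x hx.2
      have : 0 ≤ κ - 2 := by linarith
      gcongr
    · refine (hv x ⟨hx.1, hsub hx.2⟩).trans ?_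
      have := hnr x hx.2
      gcongr
    · refine (H.hb x ⟨hx.1, hsub hx.2⟩).trans ?_
      have := hnr x hx.2
      have : 0 ≤ κ := by linarith
      gcongr
    · rw [hδr] at hx2
      have := hnr x hx
      refine H.hin x (by simpa using hsub hx) (lt_of_le_of_lt ?_ hx2)
      gcongr
    · rw [hδr] at hx2
      have := hnr x hx
      refine H.hout x (by simpa using hsub hx) (lt_of_lt_of_le hx2 ?_)
      rw [neg_le_neg_iff]
      gcongr
  have hn := n_one (n := n)
  have hn0 : (0:ℝ) ≤ n := by positivity
  obtain ⟨h, g1, g2, g3, g4, g5⟩ := hLoc.approx (ε := B * r ^ σ) hr (by positivity) (by positivity)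
    (by positivity) (by positivity) (by positivity) rfl
  set L := 4 * n * (B * r ^ s) / r + A * r ^ (κ - 2) * r with hL
  have hL0 : 0 ≤ L := by rw [hL]; positivity
  have hLs : L * r ≤ (4 * n + 1) * B * r ^ s := by
    have e : L * r = 4 * n * B * r ^ s + A * r ^ κ := by
      rw [hL, Real.rpow_sub hr]
      have : r ^ (2:ℝ) = r ^ 2 := by norm_cast
      rw [this]
      field_simp
    have : A * r ^ κ ≤ B * r ^ s := by
      have := Real.rpow_le_rpow_of_exponent_ge hr hr1 (hsσ.trans hσκ)
      gcongr
    rw [e]; linarith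
  have hLα : L * r ^ (1 + α) ≤ (4 * n + 1) * B * r ^ σ := by
    have h1 : r ^ s * r ^ α ≤ r ^ σ := by
      rw [← Real.rpow_add hr]
      exact Real.rpow_le_rpow_of_exponent_ge hr hr1 hσs
    calc L * r ^ (1 + α) = (L * r) * r ^ α := by
          rw [Real.rpow_add hr, Real.rpow_one]; ring
      _ ≤ ((4 * n + 1) * B * r ^ s) * r ^ α := by gcongr
      _ = (4 * n + 1) * B * (r ^ s * r ^ α) := by ring
      _ ≤ _ := by gcongr
  have hrσ : 0 < B * r ^ σ := by positivity
  refine ⟨h, g1, g2, g3, ?_, ?_, ?_⟩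
  · intro x hx hx2
    refine (g4 x hx).trans ?_
    have : L * |xn x| ≤ L * (4 * M * r ^ (1 + α)) := by gcongr
    have h3 : 4 * M * (L * r ^ (1 + α)) ≤ 4 * M * ((4 * n + 1) * B * r ^ σ) := by gcongr
    rw [hE1]; nlinarith
  · intro x hx
    refine (g4 x hx).trans ?_
    have h1 : |xn x| ≤ r := (coord_le x _).trans (by linarith)
    have : L * |xn x| ≤ L * r := by gcongr
    have h3 : B * r ^ σ ≤ B * r ^ s := by
      have := Real.rpow_le_rpow_of_exponent_ge hr hr1 hsσ
      gcongr
    have h4 : 0 ≤ (4 * n + 1) * B * r ^ s := by positivity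
    rw [hE1]; nlinarith
  · intro x hx
    refine (g5 x hx).trans ?_
    rw [hδr]
    have h1 : A * r ^ κ ≤ B * r ^ σ := by
      have := Real.rpow_le_rpow_of_exponent_ge hr hr1 hσκ
      gcongr
    have h2 : A * r ^ (κ - 2) * r ^ 2 = A * r ^ κ := by
      rw [Real.rpow_sub hr]
      have : r ^ (2:ℝ) = r ^ 2 := by norm_cast
      rw [this]
      field_simp
    have h3 : M * (L * r ^ (1 + α)) ≤ M * ((4 * n + 1) * B * r ^ σ) := by gcongr
    have h4 : 0 ≤ M * ((4 * n + 1) * B * r ^ σ) := by positivity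
    rw [hE1, h2]; nlinarith
  
theorem KEY (α κ M s σ : ℝ) (m : ℕ) (hα : 0 < α) (hα1 : α < 1) (hκ : 2 ≤ κ) (hM : 1 ≤ M) (hs : 0 ≤ s)
    (hσs : σ ≤ s + α) (hsσ : s ≤ σ) (hσκ : σ ≤ κ) (hm1 : (m:ℝ) < σ) (hm2 : σ < m + 1) :
    ∃ C > 0, ∀ (Ω : Set (En n)) (v : En n → ℝ) (A B : ℝ), Dom Ω v A κ α M → 0 < B → 0 ≤ A → A ≤ B →
      (∀ x ∈ Ω ∩ ball 0 1, |v x| ≤ B * ‖x‖ ^ s) →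
      ∃ P : MvPolynomial (Fin n) ℝ, plap P = 0 ∧ (∀ d, m < mdeg d → coeff d P = 0) ∧
        (∀ d, Even (d (lastIdx n)) → coeff d P = 0) ∧ (∀ d, |coeff d P| ≤ C * B) ∧
        (∀ x ∈ Ω ∩ ball 0 1, |v x - peval P x| ≤ C * B * ‖x‖ ^ σ) := by
  obtain ⟨K, hK, hcam⟩ := campanato (n := n) m σ hm1 hm2
  have hσ0 : 0 < σ := lt_of_le_of_lt (by positivity) hm1
  obtain ⟨E1, hE1⟩ : ∃ E1, E1 = 4 + 4 * M * (4 * (n:ℝ) + 1) := ⟨_, rfl⟩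
  have hE1p : 0 < E1 := by rw [hE1]; positivity
  set N : ℝ := ((Iset n m).card : ℝ) with hN
  have hN0 : 0 ≤ N := by positivity
  set E2 := 2 * E1 * 16 ^ σ with hE2
  have hE2p : 0 < E2 := by positivity
  refine ⟨K * E2 + E1 * 32 ^ σ + K * E2 * 2 ^ σ + 16 ^ σ + N * (K * E2) * 16 ^ σ, by positivity, ?_⟩
  set C := K * E2 + E1 * 32 ^ σ + K * E2 * 2 ^ σ + 16 ^ σ + N * (K * E2) * 16 ^ σ with hC
  intro Ω v A B H hB hA hAB hv
  have hr : ∀ i : ℕ, (0:ℝ) < 1 / 2 ^ i ∧ (1:ℝ) / 2 ^ i ≤ 1 := fun i => by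
    refine ⟨by positivity, ?_⟩
    rw [div_le_one (by positivity)]
    exact one_le_pow₀ (by norm_num)
  choose h g1 g2 g3 g4 g5 g6 using fun i =>
    H.scale hα hκ hM hs hσs hsσ hσκ hB hA hAB hv (hr i).1 (hr i).2 hE1
  obtain ⟨hh, hh0, hhs⟩ : ∃ hh : ℕ → MvPolynomial (Fin n) ℝ, hh 0 = 0 ∧ ∀ i, hh (i+1) = h i :=
    ⟨fun i => Nat.casesOn i 0 h, rfl, fun i => rfl⟩
  have hdiff : ∀ i, ∀ x ∈ closedBall (0 : En n) ((1/8) / 2 ^ i),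
        |peval (hh (i+1) - hh i) x| ≤ (E2 * B) * ((1/8) / 2 ^ i) ^ σ := by
    intro i x hx
    rw [mem_closedBall, dist_zero_right] at hx
    cases i with
    | zero =>
      rw [hh0, hhs, sub_zero]
      have := g5 0 x (hx.trans (by norm_num))
      refine this.trans ?_
      simp only [pow_zero, div_one, Real.one_rpow, mul_one]
      have e : E2 * B * (1/8) ^ σ = E1 * B * (2 * (16 ^ σ * (1/8) ^ σ)) := by rw [hE2]; ring
      rw [e, ← Real.mul_rpow (by norm_num) (by norm_num)]
      have : (1:ℝ) ≤ (16 * (1/8)) ^ σ := Real.one_le_rpow (by norm_num) hσ0.le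
      have h0 : 0 < E1 * B := by positivity
      nlinarith
    | succ j =>
      rw [hhs, hhs]
      set r := (1:ℝ) / 2 ^ j with hrd
      have hrp : 0 < r := (hr j).1
      have e1 : (1:ℝ) / 2 ^ (j+1) = r / 2 := by rw [hrd, pow_succ]; field_simp
      have e2 : ((1:ℝ)/8) / 2 ^ (j+1) = r / 16 := by rw [hrd, pow_succ]; field_simp; norm_num
      rw [e2] at hx ⊢
      have e3 : E2 * B * (r/16) ^ σ = 2 * (E1 * B * r ^ σ) := by
        rw [hE2, Real.div_rpow hrp.le (by norm_num)]
        field_simp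
      rw [e3, peval_sub]
      have hrσ : E1 * B * (r/2) ^ σ ≤ E1 * B * r ^ σ := by gcongr; linarith
      have up : ∀ y : En n, ‖y‖ ≤ r/16 → M * r ^ (1 + α) < xn y →
          |peval (h (j+1)) y - peval (h j) y| ≤ 2 * (E1 * B * r ^ σ) := by
        intro y hy hy2
        have hyn : ‖y‖ ≤ r := by linarith
        have hyΩ : y ∈ Ω := H.hin y (by linarith [(hr j).2]) (lt_of_le_of_lt (by gcongr) hy2)
        have b1 := g6 j y ⟨hyΩ, by rw [mem_ball_zero_iff]; linarith⟩
        have b2 := g6 (j+1) y ⟨hyΩ, by rw [mem_ball_zero_iff, e1]; linarith⟩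
        rw [e1] at b2
        rw [abs_le] at *
        constructor <;> linarith [b1.1, b1.2, b2.1, b2.2]
      rcases le_or_gt (|xn x|) (M * r ^ (1 + α)) with hsl | hsl
      · have b1 := g4 j x (by linarith) (hsl.trans (by
          have : 0 ≤ M * r ^ (1 + α) := by positivity
          linarith))
        have b2 := g4 (j+1) x (by rw [e1]; linarith) (hsl.trans (by
          rw [e1, Real.div_rpow hrp.le (by norm_num)]
          have h4 : (2:ℝ) ^ (1 + α) ≤ 4 := by
            calc (2:ℝ) ^ (1 + α) ≤ 2 ^ (2:ℝ) :=
                  Real.rpow_le_rpow_of_exponent_le (by norm_num) (by linarith)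
              _ = 4 := by norm_num
          have h5 : (0:ℝ) < 2 ^ (1 + α) := by positivity
          have h6 : 0 ≤ M * r ^ (1 + α) := by positivity
          have e : 4 * M * (r ^ (1 + α) / 2 ^ (1 + α)) = M * r ^ (1 + α) * (4 / 2 ^ (1 + α)) := by ring
          rw [e]
          exact le_mul_of_one_le_right h6 ((one_le_div h5).2 h4)))
        rw [e1] at b2
        rw [abs_le] at *
        constructor <;> linarith [b1.1, b1.2, b2.1, b2.2]
      · rcases lt_abs.1 hsl with hp | hp
        · exact up x hx hp
        · have := up (rpt (lastIdx n) 0 x) (by rw [rpt_zero_norm]; exact hx)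
            (by unfold xn at hp ⊢; rw [rpt_coord]; simpa using hp)
          rw [g3, g3] at this
          rw [← abs_neg]
          convert this using 2
          ring
  obtain ⟨P, p1, p2, p3, p4, p5⟩ := hcam hh (1/8) (E2 * B) (by norm_num) (by positivity) hh0
    (fun i => by
      cases i with
      | zero => rw [hh0, plap_zero]
      | succ j => rw [hhs, g1]) hdiff
  have p4' : ∀ d, |coeff d P| ≤ K * E2 * B := by
    intro d
    by_cases hd : mdeg d ≤ m
    · refine (p4 d).trans ?_
      have hd' : (mdeg d : ℝ) ≤ m := by exact_mod_cast hd
      have : ((1:ℝ)/8) ^ (σ - mdeg d) ≤ 1 :=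
        Real.rpow_le_one (by norm_num) (by norm_num) (by linarith)
      have h0 : 0 ≤ K * (E2 * B) := by positivity
      nlinarith
    · rw [p2 d (by omega), abs_zero]; positivity
  refine ⟨P, p1, p2, fun d hd => p3 d fun i => ?_, fun d => (p4' d).trans ?_, ?_⟩
  · cases i with
    | zero => rw [hh0, coeff_zero]
    | succ j => rw [hhs, g2 j d hd]
  · gcongr
    rw [hC]
    have : 0 ≤ E1 * 32 ^ σ + K * E2 * 2 ^ σ + 16 ^ σ + N * (K * E2) * 16 ^ σ := by positivity
    linarith
  · intro x hx
    have hx1 : ‖x‖ < 1 := by simpa using hx.2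
    have hx0 : 0 < ‖x‖ := by
      rw [norm_pos_iff]
      rintro rfl
      exact H.h0 hx.1
    have hpos : 0 < B * ‖x‖ ^ σ := by positivity
    have hvP := abs_sub (v x) (peval P x)
    rcases le_or_gt ‖x‖ (1/16) with hxs | hxs
    · obtain ⟨i, i1, i2⟩ := exists_nat_pow_near_of_lt_one (x := 16 * ‖x‖) (y := (1:ℝ)/2)
        (by positivity) (by linarith) (by norm_num) (by norm_num)
      set r := (1:ℝ) / 2 ^ i with hrd
      have hrp : 0 < r := (hr i).1
      have e1 : ((1:ℝ)/2) ^ i = r := by rw [hrd, div_pow, one_pow]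
      have e2 : ((1:ℝ)/8) / 2 ^ (i+1) = r / 16 := by rw [hrd, pow_succ]; field_simp; norm_num
      rw [pow_succ, e1] at i1
      rw [e1] at i2
      have b1 := g6 i x ⟨hx.1, by rw [mem_ball_zero_iff]; linarith⟩
      have b2 := p5 (i+1) x (by rw [mem_closedBall, dist_zero_right, e2]; linarith)
      rw [hhs, e2] at b2
      have c1 : E1 * B * r ^ σ ≤ E1 * B * (32 * ‖x‖) ^ σ := by gcongr; linarith
      have c2 : K * (E2 * B) * (r/16) ^ σ ≤ K * (E2 * B) * (2 * ‖x‖) ^ σ := by gcongr; linarith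
      rw [Real.mul_rpow (by norm_num) hx0.le] at c1 c2
      have e : v x - peval P x = (v x - peval (h i) x) + (peval (h i) x - peval P x) := by ring
      rw [e]
      refine (abs_add_le _ _).trans ((add_le_add (b1.trans c1) (b2.trans c2)).trans ?_)
      have h0 : 0 ≤ (K * E2 + 16 ^ σ + N * (K * E2) * 16 ^ σ) * (B * ‖x‖ ^ σ) := by positivity
      rw [hC]; linarith
    · have a1 : (1:ℝ) ≤ 16 ^ σ * ‖x‖ ^ σ := by
        rw [← Real.mul_rpow (by norm_num) hx0.le]
        exact Real.one_le_rpow (by linarith) hσ0.le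
      have a2 : |v x| ≤ B := by
        refine (hv x hx).trans ?_
        have : ‖x‖ ^ s ≤ 1 := Real.rpow_le_one hx0.le hx1.le hs
        nlinarith
      have a3 : |peval P x| ≤ N * (K * E2 * B) := by
        have e : P = mkP m (fun d => coeff d P) := by
          ext d; rw [coeff_mkP]; split_ifs with hd
          · rfl
          · exact p2 d (by omega)
        rw [e]
        refine mkP_bound (R := 1) (fun d _ => ?_) hx1.le
        rw [one_pow, mul_one]; exact p4' d
      have a4 : (B + N * (K * E2 * B)) * 1 ≤ (B + N * (K * E2 * B)) * (16 ^ σ * ‖x‖ ^ σ) := by gcongr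
      have h0 : 0 ≤ (K * E2 + E1 * 32 ^ σ + K * E2 * 2 ^ σ) * (B * ‖x‖ ^ σ) := by positivity
      rw [hC]; linarith


open Filter Topology

lemma peval_smul_hom {P : MvPolynomial (Fin n) ℝ} {j : ℕ} (hP : ∀ d, mdeg d ≠ j → coeff d P = 0)
    (t : ℝ) (x : En n) : peval P (t • x) = t ^ j * peval P x := by
  unfold peval
  rw [eval_eq, eval_eq, Finset.mul_sum]
  apply Finset.sum_congr rfl
  intro d hd
  have hdj : mdeg d = j := by
    by_contra h
    exact (mem_support_iff.1 hd) (hP d h)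
  have : ∏ i ∈ d.support, (t • x) i ^ d i = t ^ j * ∏ i ∈ d.support, x i ^ d i := by
    rw [← hdj]
    have : t ^ mdeg d = ∏ i ∈ d.support, t ^ d i := by
      rw [Finset.prod_pow_eq_pow_sum]; rfl
    rw [this, ← Finset.prod_mul_distrib]
    apply Finset.prod_congr rfl
    intro i _
    rw [PiLp.smul_apply, smul_eq_mul, mul_pow]
  rw [this]; ring

/-- homogeneous component -/
def hc (j : ℕ) (P : MvPolynomial (Fin n) ℝ) : MvPolynomial (Fin n) ℝ :=
  mkP j (fun d => if mdeg d = j then coeff d P else 0)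

lemma coeff_hc (j : ℕ) (P : MvPolynomial (Fin n) ℝ) (d : Fin n →₀ ℕ) :
    coeff d (hc j P) = if mdeg d = j then coeff d P else 0 := by
  unfold hc
  rw [coeff_mkP]
  split_ifs with h1 h2 h2 <;> first | rfl | omega

lemma sum_hc (P : MvPolynomial (Fin n) ℝ) :
    P = ∑ j ∈ Finset.range (P.totalDegree + 1), hc j P := by
  ext d
  rw [coeff_sum]
  simp only [coeff_hc]
  rw [Finset.sum_ite_eq]
  split_ifs with h
  · rfl
  · exact (td_le_iff _ _).1 le_rfl d (by simpa [Nat.lt_succ_iff] using h)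

lemma vanish_cone {P : MvPolynomial (Fin n) ℝ} {U : Set (En n)} (hU : IsOpen U) (hUn : U.Nonempty)
    {t0 C θ : ℝ} (ht0 : 0 < t0)
    (h : ∀ x ∈ U, ∀ t, 0 < t → t < t0 → |peval P (t • x)| ≤ C * t ^ θ) :
    ∀ d, (mdeg d : ℝ) < θ → coeff d P = 0 := by
  suffices hh : ∀ j : ℕ, (j:ℝ) < θ → hc j P = 0 by
    intro d hd
    have := congrArg (coeff d) (hh _ hd)
    rw [coeff_hc, if_pos rfl, coeff_zero] at this
    exact this
  intro j
  induction j using Nat.strong_induction_on with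
  | _ j ih =>
    intro hj
    refine vanish_open hU hUn fun x hx => ?_
    set N := P.totalDegree + 1 with hN
    have key : ∀ t : ℝ, peval P (t • x) = ∑ i ∈ Finset.range N, t ^ i * peval (hc i P) x := by
      intro t
      conv_lhs => rw [sum_hc P]
      rw [peval_sum]
      apply Finset.sum_congr rfl
      intro i _
      exact peval_smul_hom (fun d hd => by rw [coeff_hc, if_neg hd]) t x
    have key2 : ∀ t : ℝ, 0 < t → peval P (t • x) / t ^ j =
        ∑ i ∈ Finset.range N, (if i < j then 0 else t ^ (i - j) * peval (hc i P) x) := by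
      intro t ht
      rw [key, Finset.sum_div]
      apply Finset.sum_congr rfl
      intro i _
      split_ifs with hij
      · rw [ih i hij (lt_trans (by exact_mod_cast hij) hj), peval_zero]; simp
      · rw [pow_sub₀ _ ht.ne' (by omega)]; field_simp
    have lim1 : Tendsto (fun t : ℝ => ∑ i ∈ Finset.range N,
        (if i < j then 0 else t ^ (i - j) * peval (hc i P) x)) (𝓝[>] 0) (𝓝 (∑ i ∈ Finset.range N,
        (if i < j then 0 else (0:ℝ) ^ (i - j) * peval (hc i P) x))) := by
      refine Tendsto.mono_left ?_ nhdsWithin_le_nhds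
      refine tendsto_finset_sum _ fun i _ => ?_
      split_ifs
      · exact tendsto_const_nhds
      · exact ((continuous_pow _).tendsto _).mul_const _
    have e : (∑ i ∈ Finset.range N, (if i < j then 0 else (0:ℝ) ^ (i - j) * peval (hc i P) x))
        = peval (hc j P) x := by
      rw [Finset.sum_eq_single j]
      · simp
      · intro i _ hij
        split_ifs
        · rfl
        · rw [zero_pow (by omega), zero_mul]
      · intro hjN
        have : hc j P = 0 := by
          ext d
          rw [coeff_hc, coeff_zero]
          split_ifs with hd
          · exact (td_le_iff _ _).1 le_rfl d (by
              rw [Finset.mem_range] at hjN; omega)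
          · rfl
        rw [this, peval_zero]; simp
    rw [e] at lim1
    have lim2 : Tendsto (fun t : ℝ => C * t ^ (θ - j)) (𝓝[>] 0) (𝓝 0) := by
      have : Tendsto (fun t : ℝ => C * t ^ (θ - j)) (𝓝 0) (𝓝 (C * 0 ^ (θ - j))) :=
        ((Real.continuousAt_rpow_const 0 (θ - j) (Or.inr (by linarith))).tendsto).const_mul C
      rw [Real.zero_rpow (by linarith), mul_zero] at this
      exact this.mono_left nhdsWithin_le_nhds
    have hev : ∀ᶠ t in 𝓝[>] (0:ℝ), |∑ i ∈ Finset.range N,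
        (if i < j then 0 else t ^ (i - j) * peval (hc i P) x)| ≤ C * t ^ (θ - j) := by
      filter_upwards [Ioo_mem_nhdsGT ht0] with t ht
      rw [← key2 t ht.1, abs_div, abs_of_pos (pow_pos ht.1 j), div_le_iff₀ (pow_pos ht.1 j),
        mul_assoc, ← Real.rpow_natCast t j, ← Real.rpow_add ht.1, sub_add_cancel]
      exact h x hx t ht.1 ht.2
    have := le_of_tendsto_of_tendsto lim1.abs lim2 hev
    exact abs_eq_zero.1 (le_antisymm this (abs_nonneg _))

def cone (n : ℕ) [NeZero n] : Set (En n) := {x | ‖x‖ < 1 ∧ 1/2 < xn x}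

lemma cone_open : IsOpen (cone n) :=
  (isOpen_lt continuous_norm continuous_const).inter (isOpen_lt continuous_const continuous_xn)

lemma cone_ne : (cone n).Nonempty := by
  refine ⟨(3/4 : ℝ) • EuclideanSpace.single (lastIdx n) 1, ?_, ?_⟩
  · rw [norm_smul]; simp; norm_num
  · unfold xn; simp; norm_num

lemma cone_in {Ω : Set (En n)} {M α : ℝ} (hα : 0 < α) (hM : 1 ≤ M)
    (hin : ∀ x : En n, ‖x‖ < 1 → M * ‖x‖ ^ (1 + α) < xn x → x ∈ Ω) :
    ∃ t0 : ℝ, 0 < t0 ∧ t0 ≤ 1 ∧ ∀ x ∈ cone n, ∀ t : ℝ, 0 < t → t < t0 → t • x ∈ Ω ∩ ball 0 1 := by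
  have hM0 : 0 < M := by linarith
  refine ⟨(1 / (2 * M)) ^ (1/α), by positivity, ?_, ?_⟩
  · apply Real.rpow_le_one (by positivity) _ (by positivity)
    rw [div_le_one (by positivity)]; linarith
  · intro x hx t ht ht0
    have h1 : (1 / (2 * M)) ^ (1/α) ≤ 1 := by
      apply Real.rpow_le_one (by positivity) _ (by positivity)
      rw [div_le_one (by positivity)]; linarith
    have hn : ‖t • x‖ = t * ‖x‖ := by rw [norm_smul, Real.norm_eq_abs, abs_of_pos ht]
    have hnt : ‖t • x‖ ≤ t := by rw [hn]; nlinarith [hx.1]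
    have hta : t ^ α ≤ 1 / (2 * M) := by
      calc t ^ α ≤ ((1 / (2 * M)) ^ (1/α)) ^ α := by gcongr
        _ = _ := by
          rw [← Real.rpow_mul (by positivity), one_div_mul_cancel hα.ne', Real.rpow_one]
    have hlt : ‖t • x‖ < 1 := by linarith
    refine ⟨hin _ hlt ?_, by simpa using hlt⟩
    calc M * ‖t • x‖ ^ (1 + α) ≤ M * t ^ (1 + α) := by gcongr
      _ = M * t ^ α * t := by rw [Real.rpow_add ht, Real.rpow_one]; ring
      _ ≤ M * (1 / (2 * M)) * t := by gcongr
      _ = t * (1/2) := by field_simp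
      _ < t * xn x := by gcongr; exact hx.2
      _ = xn (t • x) := by unfold xn; simp

lemma vanish_dom {Ω : Set (En n)} {M α : ℝ} (hα : 0 < α) (hM : 1 ≤ M)
    (hin : ∀ x : En n, ‖x‖ < 1 → M * ‖x‖ ^ (1 + α) < xn x → x ∈ Ω)
    {P : MvPolynomial (Fin n) ℝ} {C θ : ℝ} (hC : 0 ≤ C)
    (h : ∀ x ∈ Ω ∩ ball 0 1, |peval P x| ≤ C * ‖x‖ ^ θ) :
    ∀ d, (mdeg d : ℝ) < θ → coeff d P = 0 := by
  obtain ⟨t0, ht0, ht1, hc⟩ := cone_in hα hM hin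
  intro d hd
  refine vanish_cone (C := C) (θ := θ) cone_open cone_ne ht0 (fun x hx t h1 h2 => ?_) d hd
  have hθ : 0 ≤ θ := le_trans (by positivity) hd.le
  refine (h _ (hc x hx t h1 h2)).trans ?_
  have : ‖t • x‖ ≤ t := by
    rw [norm_smul, Real.norm_eq_abs, abs_of_pos h1]; nlinarith [hx.1]
  gcongr

lemma hom_bound {P : MvPolynomial (Fin n) ℝ} {j : ℕ} {c : ℝ} (hc0 : 0 ≤ c)
    (hP : ∀ d, mdeg d ≠ j → coeff d P = 0)
    (hc : ∀ d, |coeff d P| ≤ c) (x : En n) : |peval P x| ≤ (Iset n j).card * c * ‖x‖ ^ j := by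
  have e : P = mkP j (fun d => coeff d P) := by
    ext d; rw [coeff_mkP]; split_ifs with hd
    · rfl
    · exact hP d (by omega)
  rw [e, mul_assoc]
  refine mkP_bound (R := ‖x‖) (fun d _ => ?_) le_rfl
  by_cases hd : mdeg d = j
  · rw [hd]; gcongr; exact hc d
  · rw [hP d hd, abs_zero, zero_mul]; positivity

/-- one step -/
lemma iter_step (k : ℕ) (α κ M s σ : ℝ) (m : ℕ) (hα : 0 < α) (hα1 : α < 1) (hκ : 2 ≤ κ) (hM : 1 ≤ M)
    (hs : 0 ≤ s)
    (hσs : σ ≤ s + α) (hsσ : s ≤ σ) (hσκ : σ ≤ κ) (hm1 : (m:ℝ) < σ) (hm2 : σ < m + 1) (hmk : m ≤ k + 1) :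
    ∃ C > 0, ∀ (Ω : Set (En n)) (v : En n → ℝ) (A B Ku : ℝ), Dom Ω v A κ α M → 0 < B → 0 ≤ A → A ≤ B →
      (∀ x ∈ Ω ∩ ball 0 1, |v x| ≤ B * ‖x‖ ^ s) →
      (∀ x ∈ Ω ∩ ball 0 1, |v x| ≤ Ku * ‖x‖ ^ (k + α)) →
      ∃ P : MvPolynomial (Fin n) ℝ, plap P = 0 ∧ (∀ d, mdeg d ≠ k + 1 → coeff d P = 0) ∧
        (∀ d, Even (d (lastIdx n)) → coeff d P = 0) ∧ (∀ d, |coeff d P| ≤ C * B) ∧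
        (∀ x ∈ Ω ∩ ball 0 1, |v x - peval P x| ≤ C * B * ‖x‖ ^ σ) := by
  obtain ⟨C, hC, hkey⟩ := KEY (n := n) α κ M s σ m hα hα1 hκ hM hs hσs hsσ hσκ hm1 hm2
  refine ⟨C, hC, ?_⟩
  intro Ω v A B Ku H hB hA hAB hv hu
  obtain ⟨P, p1, p2, p3, p4, p5⟩ := hkey Ω v A B H hB hA hAB hv
  refine ⟨P, p1, ?_, p3, p4, p5⟩
  intro d hd
  by_cases hdm : m < mdeg d
  · exact p2 d hdm
  have hdm' : (mdeg d : ℝ) ≤ m := by exact_mod_cast not_lt.1 hdm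
  have hdk : mdeg d ≤ k := by omega
  have hdk' : (mdeg d : ℝ) ≤ k := by exact_mod_cast hdk
  refine vanish_dom (C := |Ku| + C * B) (θ := min (k + α) σ) hα hM H.hin (by positivity) ?_ d
    (lt_min (by linarith) (by linarith))
  intro x hx
  have hx1 : ‖x‖ ≤ 1 := by have := hx.2; rw [mem_ball_zero_iff] at this; exact this.le
  have hx0 : 0 < ‖x‖ := by
    rw [norm_pos_iff]
    rintro rfl
    exact H.h0 hx.1
  have e : peval P x = v x - (v x - peval P x) := by ring
  have b1 : Ku * ‖x‖ ^ (k + α) ≤ |Ku| * ‖x‖ ^ (min (k + α) σ) := by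
    have := Real.rpow_le_rpow_of_exponent_ge hx0 hx1 (min_le_left (k + α) σ)
    calc _ ≤ |Ku| * ‖x‖ ^ (k + α) := by gcongr; exact le_abs_self _
      _ ≤ _ := by gcongr
  have b2 : C * B * ‖x‖ ^ σ ≤ C * B * ‖x‖ ^ (min (k + α) σ) := by
    have := Real.rpow_le_rpow_of_exponent_ge hx0 hx1 (min_le_right (k + α) σ)
    gcongr
  rw [e]
  refine (abs_sub _ _).trans ?_
  linarith [hu x hx, p5 x hx]

theorem iter (k : ℕ) (hk : 1 ≤ k) (α M : ℝ) (hα : 0 < α) (hα1 : α < 1) (hM : 1 ≤ M) :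
    ∃ C > 0, ∀ (Ω : Set (En n)) (v : En n → ℝ) (A Ku : ℝ), Dom Ω v A (k + 1 + α) α M → 0 < A →
      (∀ x ∈ Ω ∩ ball 0 1, |v x| ≤ A) →
      (∀ x ∈ Ω ∩ ball 0 1, |v x| ≤ Ku * ‖x‖ ^ (k + α)) →
      ∃ P : MvPolynomial (Fin n) ℝ, plap P = 0 ∧ (∀ d, mdeg d ≠ k + 1 → coeff d P = 0) ∧
        (∀ d, Even (d (lastIdx n)) → coeff d P = 0) ∧ (∀ d, |coeff d P| ≤ C * A) ∧
        (∀ x ∈ Ω ∩ ball 0 1, |v x - peval P x| ≤ C * A * ‖x‖ ^ (k + 1 + α)) := by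
  have hk' : (1:ℝ) ≤ k := by exact_mod_cast hk
  have hκ : (2:ℝ) ≤ k + 1 + α := by linarith
  obtain ⟨β, hβi, hβ0, hβα⟩ := exists_irrational_btwn hα
  have main : ∀ i : ℕ, ∃ C, 1 ≤ C ∧ ∀ (Ω : Set (En n)) (v : En n → ℝ) (A Ku : ℝ),
      Dom Ω v A (k + 1 + α) α M → 0 < A →
      (∀ x ∈ Ω ∩ ball 0 1, |v x| ≤ A) →
      (∀ x ∈ Ω ∩ ball 0 1, |v x| ≤ Ku * ‖x‖ ^ (k + α)) →
      (∀ x ∈ Ω ∩ ball 0 1, |v x| ≤ C * A * ‖x‖ ^ (min (i * β) ((k:ℝ) + 1))) := by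
    intro i
    induction i with
    | zero =>
      refine ⟨1, le_rfl, fun Ω v A Ku H hA h1 h2 x hx => ?_⟩
      rw [Nat.cast_zero, zero_mul, min_eq_left (by positivity), Real.rpow_zero]
      simpa using h1 x hx
    | succ i ih =>
      obtain ⟨C, hC, ih⟩ := ih
      rcases le_or_gt ((k:ℝ) + 1) (i * β) with hik | hik
      · refine ⟨C, hC, ?_⟩
        rw [min_eq_right hik] at ih
        rw [min_eq_right (by push_cast; nlinarith)]
        exact ih
      · rw [min_eq_left hik.le] at ih
        set σ := ((i+1 : ℕ) : ℝ) * β with hσ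
        have hσe : σ = i * β + β := by rw [hσ]; push_cast; ring
        have hs0 : 0 ≤ i * β := by positivity
        have hirr : Irrational σ := by
          rw [hσ]; exact hβi.natCast_mul (by omega)
        set m := ⌊σ⌋₊ with hm
        have hm1 : (m:ℝ) < σ :=
          lt_of_le_of_ne (Nat.floor_le (by linarith)) (fun h => hirr ⟨m, by exact_mod_cast h⟩)
        have hm2 : σ < m + 1 := Nat.lt_floor_add_one σ
        have hmk : m ≤ k + 1 := by
          have : (m:ℝ) < (k + 1 + 1 : ℕ) := by push_cast; linarith
          have : m < k + 1 + 1 := by exact_mod_cast this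
          omega
        obtain ⟨C', hC', hst⟩ := iter_step (n := n) k α (k + 1 + α) M (i * β) σ m hα hα1 hκ hM hs0
          (by linarith) (by linarith) (by linarith) hm1 hm2 hmk
        set N : ℝ := ((Iset n (k+1)).card : ℝ) with hN
        have hN0 : 0 ≤ N := by positivity
        refine ⟨1 + N * (C' * C) + C' * C, by
          have : 0 ≤ N * (C' * C) + C' * C := by positivity
          linarith, fun Ω v A Ku H hA h1 h2 x hx => ?_⟩
        obtain ⟨P, p1, p2, p3, p4, p5⟩ := hst Ω v A (C * A) Ku H (by positivity) hA.le (by nlinarith)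
          (ih Ω v A Ku H hA h1 h2) h2
        have hx1 : ‖x‖ ≤ 1 := by have := hx.2; rw [mem_ball_zero_iff] at this; exact this.le
        have hx0 : 0 < ‖x‖ := by
          rw [norm_pos_iff]
          rintro rfl
          exact H.h0 hx.1
        have b1 := hom_bound (by positivity) p2 p4 x
        have b2 := p5 x hx
        have c1 : ‖x‖ ^ (k+1) ≤ ‖x‖ ^ (min σ ((k:ℝ)+1)) := by
          rw [← Real.rpow_natCast]
          exact Real.rpow_le_rpow_of_exponent_ge hx0 hx1 (by push_cast; exact min_le_right _ _)
        have c2 : ‖x‖ ^ σ ≤ ‖x‖ ^ (min σ ((k:ℝ)+1)) :=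
          Real.rpow_le_rpow_of_exponent_ge hx0 hx1 (min_le_left _ _)
        have d1 : N * (C' * (C * A)) * ‖x‖ ^ (k+1) ≤
          N * (C' * (C * A)) * ‖x‖ ^ (min σ ((k:ℝ)+1)) := by gcongr
        have d2 : C' * (C * A) * ‖x‖ ^ σ ≤
          C' * (C * A) * ‖x‖ ^ (min σ ((k:ℝ)+1)) := by gcongr
        have d3 : 0 ≤ A * ‖x‖ ^ (min σ ((k:ℝ)+1)) := by positivity
        have e : v x = peval P x + (v x - peval P x) := by ring
        rw [e]
        refine (abs_add_le _ _).trans ?_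
        linarith
  obtain ⟨i, hi⟩ := exists_nat_ge (((k:ℝ) + 1) / β)
  rw [div_le_iff₀ hβ0] at hi
  obtain ⟨C, hC, hm⟩ := main i
  rw [min_eq_right hi] at hm
  obtain ⟨C', hC', hst⟩ := iter_step (n := n) k α (k + 1 + α) M (k + 1) (k + 1 + α) (k + 1)
    hα hα1 hκ hM (by positivity) (by linarith) (by linarith) (by linarith) (by push_cast; linarith)
    (by push_cast; linarith) le_rfl
  refine ⟨C' * C, by positivity, fun Ω v A Ku H hA h1 h2 => ?_⟩
  obtain ⟨P, p1, p2, p3, p4, p5⟩ := hst Ω v A (C * A) Ku H (by positivity) hA.le (by nlinarith)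
          (hm Ω v A Ku H hA h1 h2) h2
  exact ⟨P, p1, p2, p3, fun d => (p4 d).trans (by rw [mul_assoc]),
    fun x hx => (p5 x hx).trans (by rw [← mul_assoc])⟩


open Filter Topology

lemma coeff_substLast (P : MvPolynomial (Fin n) ℝ) :
    ∀ d, coeff d (substLast 0 P) = if d (lastIdx n) = 0 then coeff d P else 0 := by
  unfold substLast
  induction P using MvPolynomial.induction_on with
  | C c =>
    intro d
    simp only [algHom_C, algebraMap_eq, coeff_C]
    split_ifs with h1 h2
    · rfl
    · subst h1; simp at h2
    · rfl
    · rfl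
  | add p q hp hq => intro d; simp only [map_add, coeff_add, hp, hq]; split_ifs <;> simp
  | mul_X p k hp =>
    intro d
    rw [map_mul, aeval_X]
    by_cases hk : k = lastIdx n
    · subst hk
      simp only [if_true, mul_zero, coeff_zero, coeff_mul_X']
      split_ifs with h1 h2
      · simp [h1] at h2
      · rfl
      · rfl
    · simp only [hk, if_false, coeff_mul_X']
      rw [hp]
      have : (d - (Finsupp.single k 1 : Fin n →₀ ℕ)) (lastIdx n) = d (lastIdx n) := by
        simp [Finsupp.single_apply, hk]
      rw [this]
      split_ifs <;> rfl

lemma mfact_pos (d : Fin n →₀ ℕ) : (1:ℝ) ≤ mfact d := by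
  unfold mfact
  have : 1 ≤ d.prod fun _ e => Nat.factorial e :=
    Finset.one_le_prod' (fun i _ => Nat.factorial_pos _)
  exact_mod_cast this

lemma pnorm_nonneg (P : MvPolynomial (Fin n) ℝ) : 0 ≤ pnorm P :=
  Finset.sum_nonneg fun d _ => by positivity

lemma coeff_le_pnorm (P : MvPolynomial (Fin n) ℝ) (d : Fin n →₀ ℕ) : |coeff d P| ≤ pnorm P := by
  by_cases hd : d ∈ P.support
  · have h1 := Finset.single_le_sum (f := fun d => (mfact d : ℝ) * |coeff d P|)
      (fun d _ => by positivity) hd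
    refine le_trans ?_ h1
    exact le_mul_of_one_le_left (abs_nonneg _) (mfact_pos d)
  · rw [notMem_support_iff.1 hd, abs_zero]; exact pnorm_nonneg P

lemma pnorm_eq_zero {P : MvPolynomial (Fin n) ℝ} (h : pnorm P ≤ 0) : P = 0 := by
  ext d
  have := (coeff_le_pnorm P d).trans h
  simpa using this

lemma derivNorm_le {P : MvPolynomial (Fin n) ℝ} {j : ℕ} {c : ℝ} (hc : ∀ d, |coeff d P| ≤ c)
    (hc0 : 0 ≤ c) : derivNorm j P ≤ (∑ d ∈ Iset n j, (mfact d : ℝ)) * c := by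
  classical
  unfold derivNorm
  rw [Finset.sum_mul]
  have h0 : (0:ℝ) ≤ ∑ d ∈ Iset n j, (mfact d : ℝ) * c := Finset.sum_nonneg fun d _ => by positivity
  rw [Real.sqrt_le_left h0]
  calc _ ≤ ∑ d ∈ Iset n j, ((mfact d : ℝ) * c) ^ 2 := by
        refine (Finset.sum_le_sum (g := fun d => ((mfact d : ℝ) * c) ^ 2) fun d _ => ?_).trans ?_
        · rw [sq_le_sq, abs_mul, abs_mul, abs_of_nonneg hc0]
          have := hc d
          gcongr
        · refine Finset.sum_le_sum_of_subset_of_nonneg ?_ fun d _ _ => by positivity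
          intro d hd
          rw [Finset.mem_filter] at hd
          exact mem_Iset.2 hd.2.le
    _ ≤ _ := by
      rw [sq (∑ d ∈ Iset n j, (mfact d : ℝ) * c), Finset.sum_mul]
      refine Finset.sum_le_sum fun d hd => ?_
      rw [sq]
      gcongr
      exact Finset.single_le_sum (f := fun d => (mfact d : ℝ) * c) (fun d _ => by positivity) hd

def Solv (N : ℕ) (F : MvPolynomial (Fin n) ℝ) : Prop :=
  ∃ Q : MvPolynomial (Fin n) ℝ, plap Q = F ∧
    ∀ e, (mdeg e ≠ N + 2 ∨ e (lastIdx n) = 0) → coeff e Q = 0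

lemma Solv.zero (N : ℕ) : Solv N (0 : MvPolynomial (Fin n) ℝ) := ⟨0, plap_zero, fun _ _ => coeff_zero _⟩

lemma Solv.sub {N : ℕ} {F G : MvPolynomial (Fin n) ℝ} (h1 : Solv N F) (h2 : Solv N G) :
    Solv N (F - G) := by
  obtain ⟨Q1, a1, b1⟩ := h1
  obtain ⟨Q2, a2, b2⟩ := h2
  exact ⟨Q1 - Q2, by rw [plap_sub, a1, a2], fun e he => by rw [coeff_sub, b1 e he, b2 e he, sub_zero]⟩

lemma Solv.sum {ι : Type*} {N : ℕ} (s : Finset ι) (F : ι → MvPolynomial (Fin n) ℝ)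
    (h : ∀ i ∈ s, Solv N (F i)) : Solv N (∑ i ∈ s, F i) := by
  classical
  induction s using Finset.induction_on with
  | empty => simpa using Solv.zero N
  | insert a s ha ih =>
    rw [Finset.sum_insert ha]
    have := (h a (Finset.mem_insert_self _ _)).sub
      ((Solv.zero N).sub (ih fun i hi => h i (Finset.mem_insert_of_mem hi)))
    simpa using this

lemma plap_monomial (e : Fin n →₀ ℕ) (a : ℝ) : plap (monomial e a) =
    ∑ i, monomial (e - Finsupp.single i 1 - Finsupp.single i 1)
      (a * (e i) * ((e - Finsupp.single i 1 : Fin n →₀ ℕ) i)) := by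
  unfold plap
  simp only [pderiv_monomial]

lemma solv_monomial : ∀ p : ℕ, ∀ d : Fin n →₀ ℕ, mdeg d - d (lastIdx n) = p →
    ∀ a : ℝ, Solv (mdeg d) (monomial d a) := by
  intro p
  induction p using Nat.strong_induction_on with
  | _ p ih =>
    intro d hd a
    set L := lastIdx n with hL
    set e := d + Finsupp.single L 2 with he
    set b : ℝ := a / ((d L + 2) * (d L + 1)) with hb
    have hS : Solv (mdeg d) (plap (monomial e b)) := by
      refine ⟨_, rfl, fun e' he' => ?_⟩
      rw [coeff_monomial, if_neg]
      rintro rfl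
      rcases he' with h | h
      · apply h; rw [he, mdeg_add, mdeg_single]
      · rw [he, ← hL] at h; simp at h
    have hterm : ∀ i ∈ Finset.univ.erase L, Solv (mdeg d)
        (monomial (e - Finsupp.single i 1 - Finsupp.single i 1)
          (b * (e i) * ((e - Finsupp.single i 1 : Fin n →₀ ℕ) i))) := by
      intro i hi
      have hiL : i ≠ L := (Finset.mem_erase.1 hi).1
      have hei : e i = d i := by rw [he]; simp [Finsupp.single_apply, hiL.symm]
      rcases Nat.lt_or_ge (d i) 2 with h2 | h2
      · have : (b * (e i) * ((e - Finsupp.single i 1 : Fin n →₀ ℕ) i)) = 0 := by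
          rw [Finsupp.tsub_apply, hei, Finsupp.single_eq_same]
          interval_cases h : d i <;> simp
        rw [this, monomial_zero]
        exact Solv.zero _
      · obtain ⟨f, hf⟩ : ∃ f : Fin n →₀ ℕ, d = f + Finsupp.single i 2 := by
          refine ⟨d - Finsupp.single i 2, ?_⟩
          rw [tsub_add_cancel_of_le]
          rw [Finsupp.single_le_iff]; exact h2
        have hef : e - Finsupp.single i 1 - Finsupp.single i 1 = f + Finsupp.single L 2 := by
          rw [tsub_tsub, ← Finsupp.single_add, he, hf, one_add_one_eq_two]
          ext j; simp only [Finsupp.tsub_apply, Finsupp.add_apply]; omega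
        rw [hef]
        have hm1 : mdeg d = mdeg f + 2 := by rw [hf, mdeg_add, mdeg_single]
        have hm2 : mdeg (f + Finsupp.single L 2) = mdeg f + 2 := by rw [mdeg_add, mdeg_single]
        have hfL : f L = d L := by rw [hf]; simp [Finsupp.single_apply, hiL]
        have hle : f L ≤ mdeg f := by rw [mdeg_eq]; exact Finsupp.le_degree L f
        have := ih (mdeg (f + Finsupp.single L 2) - (f + Finsupp.single L 2 : Fin n →₀ ℕ) L) (by
          rw [hm2]; simp only [Finsupp.add_apply, Finsupp.single_eq_same]; omega)
          (f + Finsupp.single L 2) rfl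
        rw [hm2, ← hm1] at this
        exact this _
    have h1 := hS.sub (Solv.sum _ _ hterm)
    convert h1 using 1
    rw [plap_monomial, ← Finset.add_sum_erase _ _ (Finset.mem_univ L), add_sub_cancel_right]
    have : e - Finsupp.single L 1 - Finsupp.single L 1 = d := by
      rw [tsub_tsub, ← Finsupp.single_add, he, one_add_one_eq_two]
      ext j; simp only [Finsupp.tsub_apply, Finsupp.add_apply]; omega
    rw [this]
    congr 1
    rw [he, hb]
    simp only [Finsupp.tsub_apply, Finsupp.add_apply, Finsupp.single_eq_same]
    rw [show d L + 2 - 1 = d L + 1 by omega]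
    push_cast
    have h1 : ((d L : ℝ) + 2) ≠ 0 := by positivity
    have h2 : ((d L : ℝ) + 1) ≠ 0 := by positivity
    field_simp

lemma solve_poisson (N : ℕ) : ∃ C > 0, ∀ (F : MvPolynomial (Fin n) ℝ) (S : ℝ),
    (∀ d, mdeg d ≠ N → coeff d F = 0) → (∀ d, |coeff d F| ≤ S) →
    ∃ Q : MvPolynomial (Fin n) ℝ, plap Q = F ∧
      (∀ e, (mdeg e ≠ N + 2 ∨ e (lastIdx n) = 0) → coeff e Q = 0) ∧ (∀ d, |coeff d Q| ≤ C * S) := by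
  choose q q1 q2 using fun d : Fin n →₀ ℕ => solv_monomial _ d rfl 1
  set C := 1 + ∑ d ∈ Iset n N, ∑ e ∈ (q d).support, |coeff e (q d)| with hC
  have hnn : 0 ≤ ∑ d ∈ Iset n N, ∑ e ∈ (q d).support, |coeff e (q d)| :=
    Finset.sum_nonneg fun _ _ => Finset.sum_nonneg fun _ _ => abs_nonneg _
  refine ⟨C, by linarith, ?_⟩
  intro F S h1 h2
  have hS : 0 ≤ S := (abs_nonneg _).trans (h2 0)
  refine ⟨∑ d ∈ Iset n N, MvPolynomial.C (coeff d F) * q d, ?_, ?_, ?_⟩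
  · rw [plap_sum]
    simp only [plap_C_mul, q1, C_mul_monomial, mul_one]
    have e : F = mkP N (fun d => coeff d F) := by
      ext d; rw [coeff_mkP]; split_ifs with hd
      · rfl
      · exact h1 d (by omega)
    conv_rhs => rw [e]
    rfl
  · intro e he
    rw [coeff_sum]
    apply Finset.sum_eq_zero
    intro d hd
    rw [coeff_C_mul]
    by_cases hdN : mdeg d = N
    · rw [q2 d e (by rw [hdN]; exact he), mul_zero]
    · rw [h1 d hdN, zero_mul]
  · intro e
    rw [coeff_sum]
    refine (Finset.abs_sum_le_sum_abs _ _).trans ?_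
    have : ∑ d ∈ Iset n N, |coeff e (MvPolynomial.C (coeff d F) * q d)| ≤
        ∑ d ∈ Iset n N, (∑ e ∈ (q d).support, |coeff e (q d)|) * S := by
      apply Finset.sum_le_sum
      intro d _
      rw [coeff_C_mul, abs_mul, mul_comm]
      have h3 : |coeff e (q d)| ≤ ∑ e ∈ (q d).support, |coeff e (q d)| := by
        by_cases he : e ∈ (q d).support
        · exact Finset.single_le_sum (f := fun e => |coeff e (q d)|) (fun _ _ => abs_nonneg _) he
        · rw [notMem_support_iff.1 he, abs_zero]
          exact Finset.sum_nonneg fun _ _ => abs_nonneg _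
      have := h2 d
      gcongr
    refine this.trans ?_
    rw [← Finset.sum_mul, hC]
    linarith

lemma algQ (k : ℕ) (hk : 1 ≤ k) : ∃ C > 0, ∀ (Pf Pg : MvPolynomial (Fin n) ℝ),
    (∀ d, mdeg d ≠ k - 1 → coeff d Pf = 0) → (∀ d, mdeg d ≠ k + 1 → coeff d Pg = 0) →
    ∃ Q : MvPolynomial (Fin n) ℝ, (∀ d, mdeg d ≠ k + 1 → coeff d Q = 0) ∧ plap Q = Pf ∧
      (∀ d, d (lastIdx n) = 0 → coeff d Q = coeff d Pg) ∧
      (∀ d, |coeff d Q| ≤ C * (pnorm Pf + pnorm Pg)) := by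
  obtain ⟨C, hC, hs⟩ := solve_poisson (n := n) (k - 1)
  set T : ℝ := 1 + n * ((k+1) * (k+1)) with hT
  have hT1 : 1 ≤ T := by
    rw [hT]
    have : (0:ℝ) ≤ n * ((k+1) * (k+1)) := by positivity
    linarith
  refine ⟨C * T + 1, by positivity, ?_⟩
  intro Pf Pg hf hg
  set G := substLast 0 Pg with hG
  have hGc : ∀ d, |coeff d G| ≤ pnorm Pg := by
    intro d
    rw [hG, coeff_substLast]
    split_ifs
    · exact coeff_le_pnorm _ _
    · rw [abs_zero]; exact pnorm_nonneg _
  have hGh : ∀ d, mdeg d ≠ k + 1 → coeff d G = 0 := by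
    intro d hd
    rw [hG, coeff_substLast, hg d hd, ite_self]
  have hpf := pnorm_nonneg Pf
  have hpg := pnorm_nonneg Pg
  have hlh : ∀ d, mdeg d ≠ k - 1 → coeff d (plap G) = 0 := by
    intro d hd
    rw [coeff_plap]
    apply Finset.sum_eq_zero
    intro i _
    rw [hGh _ (by rw [mdeg_add, mdeg_single]; omega)]; ring
  have hlc : ∀ d, |coeff d (plap G)| ≤ n * ((k+1) * (k+1)) * pnorm Pg := by
    intro d
    by_cases hd : mdeg d = k - 1
    · rw [coeff_plap]
      refine (Finset.abs_sum_le_sum_abs _ _).trans ?_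
      have : ∀ i ∈ Finset.univ, |coeff (d + Finsupp.single i 2) G * (d i + 2) * (d i + 1)| ≤
          pnorm Pg * (k + 1) * (k + 1) := by
        intro i _
        have hle : d i ≤ mdeg d := by rw [mdeg_eq]; exact Finsupp.le_degree i d
        have hle' : d i + 2 ≤ k + 1 := by omega
        have h1 : (d i : ℝ) + 2 ≤ k + 1 := by exact_mod_cast hle'
        rw [abs_mul, abs_mul, abs_of_nonneg (by positivity : (0:ℝ) ≤ d i + 2),
          abs_of_nonneg (by positivity : (0:ℝ) ≤ d i + 1)]
        have := hGc (d + Finsupp.single i 2)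
        gcongr
        linarith
      refine (Finset.sum_le_card_nsmul _ _ _ this).trans ?_
      simp only [Finset.card_univ, Fintype.card_fin, nsmul_eq_mul]
      apply le_of_eq; ring
    · rw [hlh d hd, abs_zero]; positivity
  obtain ⟨Q1, a1, a2, a3⟩ := hs (Pf - plap G) (T * (pnorm Pf + pnorm Pg))
    (fun d hd => by rw [coeff_sub, hf d hd, hlh d hd, sub_zero])
    (fun d => by
      rw [coeff_sub]
      refine (abs_sub _ _).trans ?_
      have h1 := coeff_le_pnorm Pf d
      have h2 := hlc d
      have : 0 ≤ n * ((k+1) * (k+1)) * pnorm Pf := by positivity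
      rw [hT]; linarith)
  refine ⟨G + Q1, ?_, ?_, ?_, ?_⟩
  · intro d hd
    rw [coeff_add, hGh d hd, a2 d (Or.inl (by omega)), add_zero]
  · rw [plap_add, a1]; ring
  · intro d hd
    rw [coeff_add, a2 d (Or.inr hd), add_zero, hG, coeff_substLast, if_pos hd]
  · intro d
    rw [coeff_add]
    refine (abs_add_le _ _).trans ?_
    have := a3 d
    have := hGc d
    linarith

lemma mono_le_j (d : Fin n →₀ ℕ) (j : Fin n) (hj : d j ≠ 0) (x : En n) :
    |d.prod (fun i e => (x i) ^ e)| ≤ |x j| * ‖x‖ ^ (mdeg d - 1) := by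
  obtain ⟨f, rfl⟩ : ∃ f : Fin n →₀ ℕ, d = f + Finsupp.single j 1 := by
    refine ⟨d - Finsupp.single j 1, ?_⟩
    rw [tsub_add_cancel_of_le]
    rw [Finsupp.single_le_iff]; omega
  have e1 : (Finsupp.single j 1 : Fin n →₀ ℕ).prod (fun i e => (x i) ^ e) = x j := by
    simp [Finsupp.prod_single_index]
  rw [Finsupp.prod_add_index' (h := fun i e => (x i) ^ e) (fun _ => pow_zero _)
    (fun _ _ _ => pow_add _ _ _), e1, abs_mul, mul_comm, mdeg_add, mdeg_single,
    Nat.add_sub_cancel]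
  gcongr
  exact mono_le f x

lemma hom_bound_n {P : MvPolynomial (Fin n) ℝ} {j : ℕ} {c : ℝ}
    (hP : ∀ d, mdeg d ≠ j + 1 → coeff d P = 0) (hPn : ∀ d, d (lastIdx n) = 0 → coeff d P = 0)
    (hc : ∀ d, |coeff d P| ≤ c) (x : En n) :
    |peval P x| ≤ (Iset n (j+1)).card * (c * (|xn x| * ‖x‖ ^ j)) := by
  have hc0 : 0 ≤ c := (abs_nonneg _).trans (hc 0)
  have e : P = mkP (j+1) (fun d => coeff d P) := by
    ext d; rw [coeff_mkP]; split_ifs with hd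
    · rfl
    · exact hP d (by omega)
  conv_lhs => rw [e]
  unfold mkP
  rw [peval_sum]
  refine (Finset.abs_sum_le_sum_abs _ _).trans ?_
  rw [← nsmul_eq_mul]
  apply Finset.sum_le_card_nsmul
  intro d hd
  rw [peval_monomial, abs_mul]
  change |coeff d P| * _ ≤ _
  by_cases h1 : mdeg d = j + 1
  · by_cases h2 : d (lastIdx n) = 0
    · rw [hPn d h2, abs_zero, zero_mul]; positivity
    · have := mono_le_j d (lastIdx n) h2 x
      rw [h1, Nat.add_sub_cancel] at this
      have := hc d
      unfold xn
      gcongr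
  · rw [hP d h1, abs_zero, zero_mul]; positivity

lemma low_bound {P : MvPolynomial (Fin n) ℝ} {j : ℕ} (hP : ∀ d, mdeg d < j → coeff d P = 0) :
    ∃ C ≥ 0, ∀ x : En n, ‖x‖ ≤ 1 → |peval P x| ≤ C * ‖x‖ ^ j := by
  refine ⟨∑ d ∈ P.support, |coeff d P|, Finset.sum_nonneg fun _ _ => abs_nonneg _, fun x hx => ?_⟩
  unfold peval
  rw [eval_eq, Finset.sum_mul]
  refine (Finset.abs_sum_le_sum_abs _ _).trans (Finset.sum_le_sum fun d hd => ?_)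
  rw [abs_mul]
  gcongr
  refine (mono_le d x).trans ?_
  apply pow_le_pow_of_le_one (norm_nonneg _) hx
  by_contra h
  exact (mem_support_iff.1 hd) (hP d (by omega))


open Filter Topology

lemma bump {y : En n} {ρ S c : ℝ} {w : En n → ℝ} (hρ : 0 < ρ) (hw : ContinuousOn w (closedBall y ρ))
    (h2 : ∀ x ∈ ball y ρ, W2 w x) (hS : ∀ x ∈ closedBall y ρ, |w x| ≤ S)
    (hl : ∀ x ∈ ball y ρ, c ≤ lapAt w x) : c * ρ ^ 2 ≤ 4 * n * S := by
  have hn := n_pos (n := n)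
  have h := MPQ (D := ball y ρ) isOpen_ball isBounded_ball (w := w)
    (bar (lastIdx n) y 0 (S - c / (2 * n) * ρ ^ 2) (c / (2 * n)) 0 0)
    (hw.mono closure_ball_subset_closedBall) h2
    (fun x hx => by
      rw [plap_bar, peval_C]
      refine le_trans (le_of_eq ?_) (hl x hx)
      field_simp; ring)
    (fun x hx => by
      rw [frontier_ball y hρ.ne'] at hx
      rw [peval_bar]
      have h1 := hS x (sphere_subset_closedBall hx)
      rw [mem_sphere, dist_eq_norm] at hx
      rw [hx]
      linarith [le_abs_self (w x)])
    y (mem_ball_self hρ)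
  rw [peval_bar] at h
  have h1 := (abs_le.1 (hS y (mem_closedBall_self hρ.le))).1
  simp only [sub_self, norm_zero] at h
  have h3 : c / (2 * n) * ρ ^ 2 ≤ 2 * S := by linarith
  have h4 : c / (2 * n) * ρ ^ 2 * (2 * n) ≤ 2 * S * (2 * n) := by gcongr
  calc c * ρ ^ 2 = c / (2 * n) * ρ ^ 2 * (2 * n) := by field_simp
    _ ≤ _ := by linarith

lemma pf_one {Ω : Set (En n)} {w : En n → ℝ} {M α : ℝ} (hα : 0 < α) (hM : 1 ≤ M)
    (hin : ∀ x : En n, ‖x‖ < 1 → M * ‖x‖ ^ (1 + α) < xn x → x ∈ Ω)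
    (h2 : ∀ x ∈ Ω ∩ ball 0 1, W2 w x) {θ Ku C2 : ℝ} {j : ℕ}
    (hw : ∀ x ∈ Ω ∩ ball 0 1, |w x| ≤ Ku * ‖x‖ ^ θ) (hθ : (j:ℝ) + 2 < θ)
    {F : MvPolynomial (Fin n) ℝ} (hF : ∀ d, mdeg d ≠ j → coeff d F = 0)
    (hl : ∀ x ∈ Ω ∩ ball 0 1, |lapAt w x - peval F x| ≤ C2 * ‖x‖ ^ (j+1)) :
    ∀ x ∈ cone n, peval F x ≤ 0 := by
  intro x0 hx0
  by_contra! hpos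
  obtain ⟨t0, ht0, ht1, hcone⟩ := cone_in hα hM hin
  set ε := peval F x0 / 2 with hε
  have hε0 : 0 < ε := by positivity
  have hU : IsOpen (cone n ∩ {z | ε < peval F z}) :=
    cone_open.inter (isOpen_lt continuous_const (continuous_peval F))
  obtain ⟨ρ', hρ', hb'⟩ := Metric.isOpen_iff.1 hU x0 ⟨hx0, by rw [mem_setOf_eq, hε]; linarith⟩
  set ρ := ρ' / 2 with hρd
  have hρ : 0 < ρ := by positivity
  have hb : closedBall x0 ρ ⊆ cone n ∩ {z | ε < peval F z} :=
    (closedBall_subset_ball (by rw [hρd]; linarith)).trans hb'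
  have key : ∀ᶠ t in 𝓝[>] (0:ℝ), ε / 2 * ρ ^ 2 ≤ 4 * n * |Ku| * t ^ (θ - (j + 2)) := by
    have hsm : (0:ℝ) < min t0 (ε / (2 * (|C2| + 1))) := by positivity
    filter_upwards [Ioo_mem_nhdsGT hsm] with t ht
    have ht' : 0 < t := ht.1
    have hts : t < t0 := ht.2.trans_le (min_le_left _ _)
    have htC : |C2| * t ≤ ε / 2 := by
      have h1 := ht.2.trans_le (min_le_right _ _)
      rw [lt_div_iff₀ (by positivity)] at h1
      nlinarith [abs_nonneg C2]
    have hsc : ∀ x ∈ closedBall (t • x0) (ρ * t), ∃ z ∈ closedBall x0 ρ, x = t • z := by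
      intro x hx
      refine ⟨t⁻¹ • x, ?_, by rw [smul_inv_smul₀ ht'.ne']⟩
      rw [mem_closedBall, dist_eq_norm] at hx ⊢
      have e : t⁻¹ • x - x0 = t⁻¹ • (x - t • x0) := by
        rw [smul_sub, inv_smul_smul₀ ht'.ne']
      rw [e, norm_smul, norm_inv, Real.norm_eq_abs, abs_of_pos ht', inv_mul_le_iff₀ ht']
      linarith
    have hin2 : ∀ x ∈ closedBall (t • x0) (ρ * t), x ∈ Ω ∩ ball 0 1 ∧ ‖x‖ ≤ t ∧
        t ^ j * ε ≤ peval F x := by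
      intro x hx
      obtain ⟨z, hz, rfl⟩ := hsc x hx
      have hz' := hb hz
      refine ⟨hcone z hz'.1 t ht' hts, ?_, ?_⟩
      · rw [norm_smul, Real.norm_eq_abs, abs_of_pos ht']; nlinarith [hz'.1.1]
      · rw [peval_smul_hom hF]
        have := hz'.2
        rw [mem_setOf_eq] at this
        gcongr
    have hbm := bump (y := t • x0) (ρ := ρ * t) (S := |Ku| * t ^ θ) (c := ε / 2 * t ^ j) (w := w)
      (by positivity)
      (fun x hx => ((h2 x (hin2 x hx).1).1.self_of_nhds).continuousAt.continuousWithinAt)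
      (fun x hx => h2 x (hin2 x (ball_subset_closedBall hx)).1)
      (fun x hx => by
        obtain ⟨a1, a2, a3⟩ := hin2 x hx
        refine (hw x a1).trans ?_
        have hθ0 : 0 ≤ θ := le_trans (by positivity) hθ.le
        calc _ ≤ |Ku| * ‖x‖ ^ θ := by gcongr; exact le_abs_self _
          _ ≤ _ := by gcongr)
      (fun x hx => by
        obtain ⟨a1, a2, a3⟩ := hin2 x (ball_subset_closedBall hx)
        have h1 := (abs_le.1 (hl x a1)).1
        have h3 : C2 * ‖x‖ ^ (j+1) ≤ ε / 2 * t ^ j := by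
          calc _ ≤ |C2| * t ^ (j+1) := by
                calc _ ≤ |C2| * ‖x‖ ^ (j+1) := by gcongr; exact le_abs_self _
                  _ ≤ _ := by gcongr
            _ = |C2| * t * t ^ j := by ring
            _ ≤ _ := by gcongr
        linarith)
    have e : t ^ θ = t ^ (θ - (j+2)) * t ^ (j + 2) := by
      rw [← Real.rpow_natCast t (j+2), ← Real.rpow_add ht']; congr 1; push_cast; ring
    rw [e] at hbm
    have htp : 0 < t ^ (j+2) := by positivity
    refine le_of_mul_le_mul_right ?_ htp
    calc _ = ε / 2 * t ^ j * (ρ * t) ^ 2 := by ring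
      _ ≤ _ := hbm
      _ = _ := by ring
  have lim2 : Tendsto (fun t : ℝ => 4 * n * |Ku| * t ^ (θ - (j + 2))) (𝓝[>] 0) (𝓝 0) := by
    have : Tendsto (fun t : ℝ => 4 * n * |Ku| * t ^ (θ - (j + 2))) (𝓝 0)
        (𝓝 (4 * n * |Ku| * 0 ^ (θ - (j + 2)))) :=
      ((Real.continuousAt_rpow_const 0 (θ - (j+2)) (Or.inr (by linarith))).tendsto).const_mul _
    rw [Real.zero_rpow (by linarith), mul_zero] at this
    exact this.mono_left nhdsWithin_le_nhds
  have := ge_of_tendsto lim2 key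
  have h3 : 0 < ε / 2 * ρ ^ 2 := by positivity
  linarith

lemma pf_vanish {Ω : Set (En n)} {u f : En n → ℝ} {M α : ℝ} (hα : 0 < α) (hM : 1 ≤ M)
    (hin : ∀ x : En n, ‖x‖ < 1 → M * ‖x‖ ^ (1 + α) < xn x → x ∈ Ω) {k : ℕ} (hk : 1 ≤ k)
    (h2 : ∀ x ∈ Ω ∩ ball 0 1, W2 u x) (hlf : ∀ x ∈ Ω ∩ ball 0 1, lapAt u x = f x) {Ku Kf : ℝ}
    (hu : ∀ x ∈ Ω ∩ ball 0 1, |u x| ≤ Ku * ‖x‖ ^ (k + α)) (hKf : 0 ≤ Kf)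
    {Pf : MvPolynomial (Fin n) ℝ} (h0 : (0 : En n) ∉ Ω)
    (hf : ∀ x ∈ Ω ∩ ball (0 : En n) 1, |f x - peval Pf x| ≤ Kf * ‖x‖ ^ (((k - 1 : ℕ) : ℝ) + α)) :
    ∀ d, mdeg d < k - 1 → coeff d Pf = 0 := by
  suffices hh : ∀ j : ℕ, j < k - 1 → hc j Pf = 0 by
    intro d hd
    have := congrArg (coeff d) (hh _ hd)
    rw [coeff_hc, if_pos rfl, coeff_zero] at this
    exact this
  intro j
  induction j using Nat.strong_induction_on with
  | _ j ih =>
    intro hj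
    have hF : ∀ d, mdeg d ≠ j → coeff d (hc j Pf) = 0 := fun d hd => by rw [coeff_hc, if_neg hd]
    obtain ⟨C1, hC1, hb⟩ := low_bound (P := Pf - hc j Pf) (j := j + 1) (fun d hd => by
      rw [coeff_sub, coeff_hc]
      split_ifs with h
      · ring
      · have := congrArg (coeff d) (ih (mdeg d) (by omega) (by omega))
        rw [coeff_hc, if_pos rfl, coeff_zero] at this
        rw [this, sub_zero])
    have hl : ∀ x ∈ Ω ∩ ball 0 1, |lapAt u x - peval (hc j Pf) x| ≤ (Kf + C1) * ‖x‖ ^ (j+1) := by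
      intro x hx
      have hx1 : ‖x‖ ≤ 1 := by have := hx.2; rw [mem_ball_zero_iff] at this; exact this.le
      have hx0 : 0 < ‖x‖ := by
        rw [norm_pos_iff]
        rintro rfl
        exact h0 hx.1
      have b1 := hf x hx
      have b2 := hb x hx1
      rw [peval_sub] at b2
      have b3 : ‖x‖ ^ (((k - 1 : ℕ) : ℝ) + α) ≤ ‖x‖ ^ (j+1) := by
        rw [← Real.rpow_natCast]
        apply Real.rpow_le_rpow_of_exponent_ge hx0 hx1
        have : ((j + 1 : ℕ) : ℝ) ≤ ((k - 1 : ℕ) : ℝ) := by exact_mod_cast hj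
        linarith
      rw [hlf x hx]
      have e : f x - peval (hc j Pf) x = (f x - peval Pf x) + (peval Pf x - peval (hc j Pf) x) := by ring
      rw [e]
      refine (abs_add_le _ _).trans ?_
      have b4 : Kf * ‖x‖ ^ (((k - 1 : ℕ) : ℝ) + α) ≤ Kf * ‖x‖ ^ (j+1) := by gcongr
      linarith
    have hθ : (j:ℝ) + 2 < k + α := by
      have : j + 2 ≤ k := by omega
      have : (j:ℝ) + 2 ≤ k := by exact_mod_cast this
      linarith
    have a1 := pf_one hα hM hin h2 hu hθ hF hl
    have a2 := pf_one (w := fun y => - u y) (F := - hc j Pf) hα hM hin (fun x hx => (h2 x hx).neg.1)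
      (fun x hx => by rw [abs_neg]; exact hu x hx) hθ
      (fun d hd => by rw [coeff_neg, hF d hd, neg_zero])
      (fun x hx => by
        rw [(h2 x hx).neg.2, peval_neg, ← abs_neg]
        convert hl x hx using 2
        ring)
    refine vanish_open cone_open cone_ne fun x hx => ?_
    have b1 := a1 x hx
    have b2 := a2 x hx
    rw [peval_neg] at b2
    linarith

lemma xpn_le (x : En n) : xpn x ≤ ‖x‖ := by
  unfold xpn
  rw [EuclideanSpace.norm_eq]
  apply Real.sqrt_le_sqrt
  calc _ ≤ ∑ i, (x i) ^ 2 :=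
        Finset.sum_le_sum_of_subset_of_nonneg (Finset.subset_univ _) fun _ _ _ => sq_nonneg _
    _ = _ := by simp

lemma fr_xn {Ω : Set (En n)} (hΩ : IsOpen Ω) {M α : ℝ} (hα : 0 < α)
    (hin : ∀ x : En n, ‖x‖ < 1 → M * ‖x‖ ^ (1 + α) < xn x → x ∈ Ω)
    (hout : ∀ x : En n, ‖x‖ < 1 → xn x < -(M * ‖x‖ ^ (1 + α)) → x ∉ Ω)
    {x : En n} (hx : x ∈ frontier Ω) (hx1 : ‖x‖ < 1) : |xn x| ≤ M * ‖x‖ ^ (1 + α) := by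
  rw [abs_le]
  constructor
  · by_contra! hcon
    have hcont : Continuous (fun y : En n => -(M * ‖y‖ ^ (1 + α))) :=
      ((Continuous.rpow_const continuous_norm (fun _ => Or.inr (by linarith : (0:ℝ) ≤ 1 + α))).const_mul M).neg
    have hU : IsOpen ({y : En n | ‖y‖ < 1} ∩ {y | xn y < -(M * ‖y‖ ^ (1 + α))}) :=
      (isOpen_lt continuous_norm continuous_const).inter (isOpen_lt continuous_xn hcont)
    obtain ⟨y, hy, hyΩ⟩ := mem_closure_iff.1 (frontier_subset_closure hx) _ hU ⟨hx1, hcon⟩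
    exact hout y hy.1 hy.2 hyΩ
  · by_contra! hcon
    rw [hΩ.frontier_eq] at hx
    exact hx.2 (hin x hx1 hcon)

open Filter Topology

lemma u_zero {Ω : Set (En n)} {u : En n → ℝ} {K s : ℝ} (hs : 0 < s) (h0 : (0 : En n) ∈ closure Ω)
    (hc : ContinuousOn u (closure Ω ∩ ball 0 1))
    (hu : ∀ x ∈ Ω ∩ ball 0 1, |u x| ≤ K * ‖x‖ ^ s) : u 0 = 0 := by
  have hmem : (0 : En n) ∈ closure Ω ∩ ball 0 1 := ⟨h0, mem_ball_self one_pos⟩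
  have hsub : Ω ∩ ball (0 : En n) 1 ⊆ closure Ω ∩ ball 0 1 :=
    inter_subset_inter_left _ subset_closure
  have t1 : Tendsto u (𝓝[Ω ∩ ball 0 1] 0) (𝓝 (u 0)) := (hc 0 hmem).mono hsub
  have hcl : (0 : En n) ∈ closure (Ω ∩ ball 0 1) := by
    rw [inter_comm]
    exact isOpen_ball.inter_closure ⟨mem_ball_self one_pos, h0⟩
  have hne : (𝓝[Ω ∩ ball (0 : En n) 1] 0).NeBot := mem_closure_iff_nhdsWithin_neBot.1 hcl
  have hcont : Continuous (fun y : En n => K * ‖y‖ ^ s) :=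
    (Continuous.rpow_const continuous_norm (fun _ => Or.inr hs.le)).const_mul K
  have t2 : Tendsto (fun y : En n => K * ‖y‖ ^ s) (𝓝[Ω ∩ ball 0 1] 0) (𝓝 0) := by
    have := (hcont.tendsto 0).mono_left (nhdsWithin_le_nhds (s := Ω ∩ ball 0 1))
    simpa [Real.zero_rpow hs.ne'] using this
  have t3 : Tendsto u (𝓝[Ω ∩ ball 0 1] 0) (𝓝 0) :=
    squeeze_zero_norm' (eventually_nhdsWithin_of_forall fun x hx => by
      rw [Real.norm_eq_abs]; exact hu x hx) t2
  exact tendsto_nhds_unique t1 t3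

lemma mdeg_eq_zero {d : Fin n →₀ ℕ} (h : mdeg d = 0) : d = 0 := by
  rw [mdeg_eq] at h
  exact (Finsupp.degree_eq_zero_iff d).1 h

set_option maxHeartbeats 1000000 in
theorem main8 (k : ℕ) (hk : 1 ≤ k)
    (α : ℝ) (hα0 : 0 < α) (hα1 : α < 1) (M : ℝ) :
    ∃ C : ℝ, 0 < C ∧
      ∀ (Ω : Set (En n)) (u f g : En n → ℝ)
        (Pu Pf Pg : MvPolynomial (Fin n) ℝ) (Ku Kf Kg KΩ Mu : ℝ),
        IsOpen Ω → (0 : En n) ∈ frontier Ω →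
        SolvesDirichlet Ω u f g →
        0 ≤ KΩ → Domain1α α KΩ Ω → KΩ ≤ M →
        Pu.totalDegree ≤ k →
        (∀ x ∈ Ω ∩ ball (0 : En n) 1, |u x - peval Pu x| ≤ Ku * ‖x‖ ^ ((k : ℝ) + α)) →
        (∀ d : Fin n →₀ ℕ, mdeg d ≤ k → MvPolynomial.coeff d Pu = 0) →
        Pf.totalDegree ≤ k - 1 → 0 ≤ Kf →
        (∀ x ∈ Ω ∩ ball (0 : En n) 1,
          |f x - peval Pf x| ≤ Kf * ‖x‖ ^ (((k - 1 : ℕ) : ℝ) + α)) →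
        Pg.totalDegree ≤ k + 1 → 0 ≤ Kg →
        (∀ x ∈ frontier Ω ∩ ball (0 : En n) 1,
          |g x - peval Pg x| ≤ Kg * ‖x‖ ^ (((k + 1 : ℕ) : ℝ) + α)) →
        (∀ d : Fin n →₀ ℕ, 1 ≤ mdeg d → mdeg d ≤ k → MvPolynomial.coeff d Pg = 0) →
        0 ≤ Mu → (∀ x ∈ Ω ∩ ball (0 : En n) 1, |u x| ≤ Mu) →
        ∃ P : MvPolynomial (Fin n) ℝ, P.IsHomogeneous (k + 1) ∧
          (∀ x ∈ Ω ∩ ball (0 : En n) 1,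
            |u x - peval P x| ≤
              C * ‖x‖ ^ (((k + 1 : ℕ) : ℝ) + α) * (Mu + (pnorm Pf + Kf) + (pnorm Pg + Kg))) ∧
          derivNorm (k + 1) P ≤ C * (Mu + (pnorm Pf + Kf) + (pnorm Pg + Kg)) ∧
          plap P = Pf ∧
          substLast 0 P = substLast 0 Pg := by
  set M' := max M 1 with hM'
  have hM1 : 1 ≤ M' := le_max_right _ _
  obtain ⟨C1, hC1, hQ⟩ := algQ (n := n) k hk
  obtain ⟨C2, hC2, hI⟩ := iter (n := n) k hk α M' hα0 hα1 hM1
  set c : ℝ := (((Iset n (k+1)).card : ℕ) : ℝ) with hcdef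
  have hc0 : 0 ≤ c := by positivity
  set D : ℝ := 1 + c * (1 + C1) * M' with hD
  have hD1 : 1 ≤ D := by
    have : 0 ≤ c * (1 + C1) * M' := by positivity
    linarith
  set S : ℝ := ∑ d ∈ Iset n (k+1), (mfact d : ℝ) with hS
  have hS0 : 0 ≤ S := Finset.sum_nonneg fun _ _ => by positivity
  have hCpos : 0 < C2 * D + S * (C1 + C2 * D) := by positivity
  refine ⟨C2 * D + S * (C1 + C2 * D), hCpos, ?_⟩
  intro Ω u f g Pu Pf Pg Ku Kf Kg KΩ Mu hΩ h0fr hsol hKΩ hdom hKM hPu huPu hPu0 hPf hKf hf hPg hKg hg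
    hPg0 hMu0 hMu
  have h0 : (0 : En n) ∉ Ω := by
    rw [hΩ.frontier_eq] at h0fr; exact h0fr.2
  have hkey : ∀ x : En n, KΩ * (xpn x) ^ ((1 : ℝ) + α) ≤ M' * ‖x‖ ^ (1 + α) := by
    intro x
    have h1 : 0 ≤ xpn x := Real.sqrt_nonneg _
    have h2 : (xpn x) ^ ((1 : ℝ) + α) ≤ ‖x‖ ^ (1 + α) :=
      Real.rpow_le_rpow h1 (xpn_le x) (by linarith)
    exact mul_le_mul (hKM.trans (le_max_left _ _)) h2 (Real.rpow_nonneg h1 _) (by linarith)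
  have hin : ∀ x : En n, ‖x‖ < 1 → M' * ‖x‖ ^ (1 + α) < xn x → x ∈ Ω := fun x hx h =>
    hdom.1 x hx (lt_of_le_of_lt (hkey x) h)
  have hout : ∀ x : En n, ‖x‖ < 1 → xn x < -(M' * ‖x‖ ^ (1 + α)) → x ∉ Ω := fun x hx h =>
    hdom.2 x hx (lt_of_lt_of_le h (neg_le_neg (hkey x)))
  obtain ⟨huc, hu2, hug⟩ := hsol
  have hW : ∀ x ∈ Ω ∩ ball 0 1, W2 u x := by
    intro x hx
    refine ⟨?_, (hu2 x hx).2.1⟩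
    filter_upwards [(hΩ.inter isOpen_ball).mem_nhds hx] with y hy
    exact (hu2 y hy).1
  have hlf : ∀ x ∈ Ω ∩ ball 0 1, lapAt u x = f x := fun x hx => (hu2 x hx).2.2
  have hPuz : Pu = 0 := by
    ext d
    by_cases h : mdeg d ≤ k
    · simpa using hPu0 d h
    · simpa using (td_le_iff _ _).1 hPu d (by omega)
  have hu : ∀ x ∈ Ω ∩ ball 0 1, |u x| ≤ Ku * ‖x‖ ^ ((k:ℝ) + α) := by
    intro x hx
    have := huPu x hx
    rwa [hPuz, peval_zero, sub_zero] at this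
  have hu0 : u 0 = 0 := u_zero (by positivity) (frontier_subset_closure h0fr) huc hu
  have hg0 : coeff 0 Pg = 0 := by
    have h1 := hg 0 ⟨h0fr, mem_ball_self one_pos⟩
    rw [← hug 0 ⟨h0fr, mem_ball_self one_pos⟩, hu0, norm_zero, Real.zero_rpow (by positivity), mul_zero] at h1
    have h2 : peval Pg 0 = 0 := by
      have := abs_nonpos_iff.1 h1
      linarith
    rw [← coeff_zero_eval]
    exact h2
  have hPgh : ∀ d, mdeg d ≠ k + 1 → coeff d Pg = 0 := by
    intro d hd
    rcases Nat.eq_zero_or_pos (mdeg d) with h | h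
    · rw [mdeg_eq_zero h]; exact hg0
    · by_cases h' : mdeg d ≤ k
      · exact hPg0 d h h'
      · exact (td_le_iff _ _).1 hPg d (by omega)
  have hPfl := pf_vanish hα0 hM1 hin hk hW hlf hu hKf h0 hf
  have hPfh : ∀ d, mdeg d ≠ k - 1 → coeff d Pf = 0 := by
    intro d hd
    by_cases h' : mdeg d < k - 1
    · exact hPfl d h'
    · exact (td_le_iff _ _).1 hPf d (by omega)
  have hnf := pnorm_nonneg Pf
  have hng := pnorm_nonneg Pg
  set N := Mu + (pnorm Pf + Kf) + (pnorm Pg + Kg) with hN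
  have hN0 : 0 ≤ N := by positivity
  rcases hN0.eq_or_lt with hz | hNpos
  · have e1 : Pf = 0 := pnorm_eq_zero (by linarith)
    have e2 : Pg = 0 := pnorm_eq_zero (by linarith)
    refine ⟨0, isHomogeneous_zero _ _ _, ?_, ?_, ?_, ?_⟩
    · intro x hx
      have := hMu x hx
      rw [← hz, mul_zero, peval_zero, sub_zero]
      linarith
    · rw [← hz, mul_zero]; simp [derivNorm]
    · rw [e1, plap_zero]
    · rw [e2]
  obtain ⟨Q, q1, q2, q3, q4⟩ := hQ Pf Pg hPfh hPgh
  have hQN : ∀ d, |coeff d Q| ≤ C1 * N := fun d => (q4 d).trans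
    (mul_le_mul_of_nonneg_left (by linarith) hC1.le)
  have hQb := hom_bound (by positivity) q1 hQN
  rw [← hcdef] at hQb
  have hNA : N ≤ D * N := le_mul_of_one_le_left hN0 hD1
  have hDN : D * N = N + c * (1 + C1) * M' * N := by rw [hD]; ring
  have hcc : c * (C1 * N) ≤ c * (1 + C1) * M' * N := by
    have h3 : 0 ≤ c * N := by positivity
    have h1 : C1 ≤ (1 + C1) * M' := by nlinarith
    linear_combination h3 * 0 + mul_le_mul_of_nonneg_left h1 h3
  have hk1 : (((k - 1 : ℕ) : ℝ)) = (k:ℝ) - 1 := by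
    rw [Nat.cast_sub hk]; simp
  have hDom : Dom Ω (fun y => u y - peval Q y) (D * N) (k + 1 + α) α M' := by
    refine ⟨hΩ, h0, huc.sub (continuous_peval Q).continuousOn,
      fun x hx => ((hW x hx).sub (W2_peval Q x)).1, ?_, ?_, hin, hout⟩
    · intro x hx
      rw [((hW x hx).sub (W2_peval Q x)).2, lapAt_peval, q2, hlf x hx]
      refine (hf x hx).trans ?_
      rw [hk1, show (k:ℝ) + 1 + α - 2 = k - 1 + α by ring]
      exact mul_le_mul_of_nonneg_right (by linarith) (Real.rpow_nonneg (norm_nonneg _) _)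
    · intro x hx
      have hx1 : ‖x‖ < 1 := by simpa using hx.2
      have b1 := hg x hx
      have b2 := hom_bound_n (P := Pg - Q) (j := k) (c := (1 + C1) * N)
        (fun d hd => by rw [coeff_sub, hPgh d hd, q1 d hd, sub_zero])
        (fun d hd => by rw [coeff_sub, q3 d hd, sub_self])
        (fun d => by
          rw [coeff_sub]
          have := abs_sub (coeff d Pg) (coeff d Q)
          have := coeff_le_pnorm Pg d
          have := hQN d
          linarith) x
      rw [← hcdef, peval_sub] at b2
      have b3 := fr_xn hΩ hα0 hin hout hx.1 hx1
      have e : ‖x‖ ^ ((k:ℝ) + 1 + α) = ‖x‖ ^ (1 + α) * ‖x‖ ^ k := by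
        rw [← Real.rpow_natCast, ← Real.rpow_add_of_nonneg (norm_nonneg _) (by linarith) (by positivity)]
        congr 1; ring
      have hx0 : 0 ≤ ‖x‖ ^ ((k:ℝ) + 1 + α) := Real.rpow_nonneg (norm_nonneg _) _
      have b4 : c * ((1 + C1) * N * (|xn x| * ‖x‖ ^ k)) ≤ c * (1 + C1) * M' * N * ‖x‖ ^ ((k:ℝ) + 1 + α) := by
        rw [e]
        have : |xn x| * ‖x‖ ^ k ≤ M' * ‖x‖ ^ (1 + α) * ‖x‖ ^ k :=
          mul_le_mul_of_nonneg_right b3 (by positivity)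
        have h2 : 0 ≤ c * ((1 + C1) * N) := by positivity
        refine (le_of_eq (by ring)).trans ((mul_le_mul_of_nonneg_left this h2).trans (le_of_eq (by ring)))
      have b5 : Kg * ‖x‖ ^ ((((k + 1 : ℕ) : ℝ)) + α) ≤ N * ‖x‖ ^ ((k:ℝ) + 1 + α) := by
        push_cast
        exact mul_le_mul_of_nonneg_right (by linarith) hx0
      rw [hug x hx, hDN, add_mul]
      calc |g x - peval Q x| = |(g x - peval Pg x) + (peval Pg x - peval Q x)| := by congr 1; ring
        _ ≤ _ := (abs_add_le _ _).trans (by linarith)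
  have hb1 : ∀ x ∈ Ω ∩ ball 0 1, |u x - peval Q x| ≤ D * N := by
    intro x hx
    have hx1 : ‖x‖ < 1 := by simpa using hx.2
    have b1 := hQb x
    have b2 : ‖x‖ ^ (k+1) ≤ 1 := pow_le_one₀ (norm_nonneg _) hx1.le
    have b3 : c * (C1 * N) * ‖x‖ ^ (k+1) ≤ c * (C1 * N) :=
      mul_le_of_le_one_right (by positivity) b2
    have b4 := abs_sub (u x) (peval Q x)
    have b5 := hMu x hx
    rw [hDN]
    linarith
  have hb2 : ∀ x ∈ Ω ∩ ball 0 1, |u x - peval Q x| ≤ (Ku + c * (C1 * N)) * ‖x‖ ^ ((k:ℝ) + α) := by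
    intro x hx
    have hx1 : ‖x‖ < 1 := by simpa using hx.2
    have hx0 : 0 < ‖x‖ := norm_pos_iff.2 fun h => h0 (h ▸ hx.1)
    have b1 := hQb x
    have b2 : ‖x‖ ^ (k+1) ≤ ‖x‖ ^ ((k:ℝ) + α) := by
      rw [← Real.rpow_natCast]
      apply Real.rpow_le_rpow_of_exponent_ge hx0 hx1.le
      push_cast; linarith
    have b3 : c * (C1 * N) * ‖x‖ ^ (k+1) ≤ c * (C1 * N) * ‖x‖ ^ ((k:ℝ) + α) :=
      mul_le_mul_of_nonneg_left b2 (by positivity)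
    have b4 := abs_sub (u x) (peval Q x)
    have b5 := hu x hx
    rw [add_mul]
    linarith
  obtain ⟨Pv, p1, p2, p3, p4, p5⟩ := hI Ω _ (D * N) _ hDom (by positivity) hb1 hb2
  refine ⟨Q + Pv, ?_, ?_, ?_, ?_, ?_⟩
  · intro d hd
    by_contra hne
    have hne' : mdeg d ≠ k + 1 := by
      rw [mdeg_eq, Finsupp.degree_eq_weight_one]; exact hne
    exact hd (by rw [coeff_add, q1 d hne', p2 d hne', add_zero])
  · intro x hx
    have := p5 x hx
    rw [peval_add, ← sub_sub]
    refine this.trans ?_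
    push_cast
    have hx0 : 0 ≤ ‖x‖ ^ ((k:ℝ) + 1 + α) * N := by positivity
    have : 0 ≤ S * (C1 + C2 * D) := by positivity
    have h9 := mul_nonneg this hx0
    linear_combination h9
  · have hcf : ∀ d, |coeff d (Q + Pv)| ≤ (C1 + C2 * D) * N := by
      intro d
      rw [coeff_add]
      have := abs_add_le (coeff d Q) (coeff d Pv)
      have := hQN d
      have := p4 d
      linarith
    refine (derivNorm_le hcf (by positivity)).trans ?_
    rw [← hS]
    have h9 : 0 ≤ C2 * D * N := by positivity
    linear_combination h9
  · rw [plap_add, q2, p1, add_zero]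
  · ext d
    rw [coeff_substLast, coeff_substLast]
    split_ifs with hd
    · rw [coeff_add, q3 d hd, p3 d (by rw [hd]; exact Even.zero), add_zero]
    · rfl

end MyProof

/-- Lemma 2.2: boundary pointwise `C^{k+1,α}` regularity for the Dirichlet
problem on a `C^{1,α}` domain when the derivatives of `u` up to order `k` and of `g` up to
order `k` (except `g(0)`) vanish at `0 ∈ ∂Ω`. -/
theorem stmt_8 (n : ℕ) [NeZero n] (hn : 2 ≤ n) (k : ℕ) (hk : 1 ≤ k)
    (α : ℝ) (hα0 : 0 < α) (hα1 : α < 1) (M : ℝ) :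
    ∃ C : ℝ, 0 < C ∧
      ∀ (Ω : Set (En n)) (u f g : En n → ℝ)
        (Pu Pf Pg : MvPolynomial (Fin n) ℝ) (Ku Kf Kg KΩ Mu : ℝ),
        IsOpen Ω → IsConnected Ω → IsBounded Ω → (0 : En n) ∈ frontier Ω →
        SolvesDirichlet Ω u f g →
        -- `∂Ω ∈ C^{1,α}(0)` with `‖∂Ω∩B₁‖_{C^{1,α}(0)} ≤ M`
        0 ≤ KΩ → Domain1α α KΩ Ω → KΩ ≤ M →
        -- `u ∈ C^{k,α}(0)` with `u(0) = |Du(0)| = ⋯ = |D^k u(0)| = 0`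
        Pu.totalDegree ≤ k →
        (∀ x ∈ Ω ∩ ball (0 : En n) 1, |u x - peval Pu x| ≤ Ku * ‖x‖ ^ ((k : ℝ) + α)) →
        (∀ d : Fin n →₀ ℕ, mdeg d ≤ k → MvPolynomial.coeff d Pu = 0) →
        -- `f ∈ C^{k-1,α}(0)`
        Pf.totalDegree ≤ k - 1 → 0 ≤ Kf →
        (∀ x ∈ Ω ∩ ball (0 : En n) 1,
          |f x - peval Pf x| ≤ Kf * ‖x‖ ^ (((k - 1 : ℕ) : ℝ) + α)) →
        -- `g ∈ C^{k+1,α}(0)` with `|Dg(0)| = ⋯ = |D^k g(0)| = 0`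
        Pg.totalDegree ≤ k + 1 → 0 ≤ Kg →
        (∀ x ∈ frontier Ω ∩ ball (0 : En n) 1,
          |g x - peval Pg x| ≤ Kg * ‖x‖ ^ (((k + 1 : ℕ) : ℝ) + α)) →
        (∀ d : Fin n →₀ ℕ, 1 ≤ mdeg d → mdeg d ≤ k → MvPolynomial.coeff d Pg = 0) →
        -- `‖u‖_{L^∞(Ω∩B₁)} ≤ Mu`
        0 ≤ Mu → (∀ x ∈ Ω ∩ ball (0 : En n) 1, |u x| ≤ Mu) →
        -- conclusion: `u ∈ C^{k+1,α}(0)` with homogeneous `P` of degree `k+1`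
        ∃ P : MvPolynomial (Fin n) ℝ, P.IsHomogeneous (k + 1) ∧
          (∀ x ∈ Ω ∩ ball (0 : En n) 1,
            |u x - peval P x| ≤
              C * ‖x‖ ^ (((k + 1 : ℕ) : ℝ) + α) * (Mu + (pnorm Pf + Kf) + (pnorm Pg + Kg))) ∧
          derivNorm (k + 1) P ≤ C * (Mu + (pnorm Pf + Kf) + (pnorm Pg + Kg)) ∧
          plap P = Pf ∧
          substLast 0 P = substLast 0 Pg := by
  obtain ⟨C, hC, h⟩ := main8 (n := n) k hk α hα0 hα1 M
  refine ⟨C, hC, ?_⟩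
  intro Ω u f g Pu Pf Pg Ku Kf Kg KΩ Mu hΩ _ _
  exact h Ω u f g Pu Pf Pg Ku Kf Kg KΩ Mu hΩ
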